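/- arXiv:2005.06207 — 6 statements merged into one kernel-verified Lean document; each statement's English description precedes it below -/
import Mathlib

section
/- Suppose the standing assumptions on f, g, h, Ω, F hold together with Assumptions 1 and 2. Let a > 0, N ∈ ℕ, and 0 < α̲ ≤ ᾱ. Let (x^k) be a sequence in ℝⁿ with x⁰ ∈ dom(F) such that for every k ∈ ℕ there exist α_k ∈ [α̲, ᾱ] and y^{k+1} ∈ ∂g(x^k) with x^{k+1} ∈ prox_{α_k·f}(x^k − α_k·∇h(x^k) + α_k·c_k·y^{k+1}) where c_k := F(x^k), and moreover x^{k+1} ∈ dom(F) and F(x^{k+1}) ≤ max{c_j : max(k−N,0) ≤ j ≤ k} − (a/2)·‖x^{k+1} − x^k‖₂². Then every accumulation point x⋆ of (x^k) lies in dom(F) and is a critical point of F: there exists y⋆ ∈ ∂g(x⋆) with F(x⋆)·y⋆ − ∇h(x⋆) ∈ ∂̂f(x⋆). -/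
open Filter Topology
open scoped RealInnerProductSpace

noncomputable section

/-- The Fréchet subdifferential of an extended-real-valued function `φ` at `x`:
the set of `y` with `liminf_{z→x, z≠x} (φ z − φ x − ⟨y, z−x⟩)/‖z−x‖ ≥ 0`,
empty when `φ x = +∞`. -/
def fsub {n : ℕ} (φ : EuclideanSpace ℝ (Fin n) → EReal) (x : EuclideanSpace ℝ (Fin n)) :
    Set (EuclideanSpace ℝ (Fin n)) :=
  {y | φ x ≠ ⊤ ∧
    0 ≤ liminf (fun z => (φ z - φ x - ((⟪y, z - x⟫ : ℝ) : EReal)) / ((‖z - x‖ : ℝ) : EReal))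
      (𝓝[≠] x)}

/-- The limiting (Mordukhovich) subdifferential. -/
def lsub {n : ℕ} (φ : EuclideanSpace ℝ (Fin n) → EReal) (x : EuclideanSpace ℝ (Fin n)) :
    Set (EuclideanSpace ℝ (Fin n)) :=
  {y | ∃ u : ℕ → EuclideanSpace ℝ (Fin n), ∃ v : ℕ → EuclideanSpace ℝ (Fin n),
      Tendsto u atTop (𝓝 x) ∧ Tendsto (fun k => φ (u k)) atTop (𝓝 (φ x)) ∧
      (∀ k, v k ∈ fsub φ (u k)) ∧ Tendsto v atTop (𝓝 y)}

/-- The subdifferential of a convex real-valued function. -/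
def csub {n : ℕ} (g : EuclideanSpace ℝ (Fin n) → ℝ) (x : EuclideanSpace ℝ (Fin n)) :
    Set (EuclideanSpace ℝ (Fin n)) :=
  {y | ∀ z, g x + ⟪y, z - x⟫ ≤ g z}

/-- The (possibly set-valued) proximity operator of a proper lsc extended-real-valued
function `ψ` at `u`. -/
def proxSet {n : ℕ} (ψ : EuclideanSpace ℝ (Fin n) → EReal) (u : EuclideanSpace ℝ (Fin n)) :
    Set (EuclideanSpace ℝ (Fin n)) :=
  {y | ∀ z, ψ y + ((‖y - u‖ ^ 2 / 2 : ℝ) : EReal) ≤ ψ z + ((‖z - u‖ ^ 2 / 2 : ℝ) : EReal)}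

/-- The fractional objective `F = (f+h)/g` on `Ω ∩ dom f`, `+∞` elsewhere. -/
def Ffrac {n : ℕ} (f : EuclideanSpace ℝ (Fin n) → EReal) (g h : EuclideanSpace ℝ (Fin n) → ℝ) :
    EuclideanSpace ℝ (Fin n) → EReal :=
  fun x => if g x ≠ 0 ∧ f x ≠ ⊤ then ((((f x).toReal + h x) / g x : ℝ) : EReal) else ⊤

/-- Nonmonotone line search: the decrements tend to zero. -/
lemma nm_aux (c d : ℕ → ℝ) (N : ℕ) (hc : ∀ k, 0 ≤ c k) (hd : ∀ k, 0 ≤ d k)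
    (hdec : ∀ k, c (k + 1) ≤ (Finset.Icc (k - N) k).sup'
      (Finset.nonempty_Icc.mpr (Nat.sub_le k N)) c - d k)  :
    (∀ k, c k ≤ c 0) ∧
    ((∀ ε > 0, ∃ δ > 0, ∀ k, d k < δ → |c (k + 1) - c k| < ε) → Tendsto d atTop (𝓝 0)) := by
  set M : ℕ → ℝ := fun k => (Finset.Icc (k - N) k).sup'
      (Finset.nonempty_Icc.mpr (Nat.sub_le k N)) c with hM
  have hdec' : ∀ k, c (k + 1) ≤ M k - d k := hdec
  have hcM : ∀ k, c k ≤ M k := fun k =>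
    Finset.le_sup' c (Finset.mem_Icc.mpr ⟨Nat.sub_le k N, le_rfl⟩)
  have hanti : Antitone M := by
    apply antitone_nat_of_succ_le
    intro k
    apply Finset.sup'_le
    intro j hj
    rw [Finset.mem_Icc] at hj
    rcases Nat.lt_or_ge k j with hkj | hkj
    · have : j = k + 1 := by omega
      subst this
      linarith [hdec' k, hd k]
    · exact Finset.le_sup' c (Finset.mem_Icc.mpr ⟨by omega, hkj⟩)
  have hM0 : M 0 = c 0 := by simp [hM]
  refine ⟨fun k => (hcM k).trans (hM0 ▸ hanti (Nat.zero_le k)), fun hu => ?_⟩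
  have hbdd : BddBelow (Set.range M) := ⟨0, by rintro _ ⟨k, rfl⟩; exact (hc k).trans (hcM k)⟩
  have hlim := tendsto_atTop_ciInf hanti hbdd
  set m := ⨅ i, M i with hm
  have hmM : ∀ k, m ≤ M k := fun k => ciInf_le hbdd k
  have hMe : ∀ ε > 0, ∀ᶠ k in atTop, M k < m + ε := fun ε hε =>
    hlim.eventually (gt_mem_nhds (by linarith))
  have P : ∀ j : ℕ, ∀ ε > 0, ∀ᶠ k in atTop, m ≤ c (k + j) → m - ε ≤ c k := by
    intro j
    induction j with
    | zero => intro ε hε; exact Eventually.of_forall fun k hk => by simp at hk; linarith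
    | succ j ih =>
      intro ε hε
      obtain ⟨δ, hδ, H⟩ := hu (ε / 2) (by linarith)
      have h1 := (tendsto_add_atTop_nat 1).eventually
        (ih (min (ε / 2) (δ / 2)) (by positivity))
      filter_upwards [h1, hMe (δ / 2) (by linarith)] with k hk hk2 hk3
      have h2 := hk (by rwa [show k + 1 + j = k + (j + 1) by ring])
      have h3 := hdec' k
      have h4 := min_le_left (ε / 2) (δ / 2)
      have h5 := min_le_right (ε / 2) (δ / 2)
      have h6 := abs_lt.mp (H k (by linarith))
      linarith [h6.2]
  rw [Metric.tendsto_nhds]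
  intro ε hε
  have hall : ∀ᶠ k in atTop, ∀ j ∈ Finset.range (N + 1), m ≤ c (k + j) → m - ε / 2 ≤ c k :=
    (Filter.eventually_all_finset _).mpr fun j _ => P j _ (by linarith)
  filter_upwards [(tendsto_add_atTop_nat 1).eventually hall, hMe (ε / 2) (by linarith)] with k hk hk2
  obtain ⟨l, hl, hle⟩ := Finset.exists_mem_eq_sup' (Finset.nonempty_Icc.mpr (Nat.sub_le (k + 1 + N) N)) c
  rw [Finset.mem_Icc] at hl
  have h1 : m ≤ c l := hle ▸ hmM (k + 1 + N)
  have h2 := hk (l - (k + 1)) (Finset.mem_range.mpr (by omega))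
    (by rwa [show k + 1 + (l - (k + 1)) = l by omega])
  rw [Real.dist_eq, sub_zero, abs_of_nonneg (hd k)]
  linarith [hdec' k]

/-- Subgradients are bounded on bounded sets. -/
lemma csub_bdd {n : ℕ} (g : EuclideanSpace ℝ (Fin n) → ℝ) (hg : Continuous g)
    (S : Set (EuclideanSpace ℝ (Fin n))) (hS : Bornology.IsBounded S) :
    ∃ B : ℝ, ∀ x ∈ S, ∀ y ∈ csub g x, ‖y‖ ≤ B := by
  obtain ⟨R, hR⟩ := hS.subset_closedBall 0
  obtain ⟨B, hB⟩ := (isCompact_closedBall (0 : EuclideanSpace ℝ (Fin n)) (R + 1)).exists_bound_of_continuousOn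
    hg.continuousOn
  refine ⟨2 * B, fun x hx y hy => ?_⟩
  have hxR : ‖x‖ ≤ R := by simpa using hR hx
  have hx1 := hB x (by simp; linarith)
  by_cases hy0 : y = 0
  · subst hy0
    have := (norm_nonneg _).trans hx1
    simp only [norm_zero]
    linarith
  · have hyn : 0 < ‖y‖ := norm_pos_iff.mpr hy0
    have h1 := hy (x + (‖y‖⁻¹) • y)
    have hn1 : ‖(‖y‖⁻¹) • y‖ = 1 := by
      rw [norm_smul, norm_inv, norm_norm, inv_mul_cancel₀ hyn.ne']
    have h2 := hB (x + (‖y‖⁻¹) • y) (by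
      rw [mem_closedBall_zero_iff]
      linarith [norm_add_le x ((‖y‖⁻¹) • y)])
    rw [add_sub_cancel_left, inner_smul_right, real_inner_self_eq_norm_sq,
      show ‖y‖⁻¹ * ‖y‖ ^ 2 = ‖y‖ by field_simp] at h1
    rw [Real.norm_eq_abs] at hx1 h2
    linarith [(abs_le.mp hx1).1, (abs_le.mp h2).2]

/-- A quadratic lower support yields a Fréchet subgradient. -/
lemma fsub_of_quad {n : ℕ} (f : EuclideanSpace ℝ (Fin n) → EReal)
    (hb : ∀ z, f z ≠ ⊥) (x v : EuclideanSpace ℝ (Fin n)) (hx : f x ≠ ⊤) (C : ℝ)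
    (H : ∀ z, f z ≠ ⊤ → (f x).toReal + ⟪v, z - x⟫ - C * ‖z - x‖ ^ 2 ≤ (f z).toReal) :
    v ∈ fsub f x := by
  refine ⟨hx, ?_⟩
  have hlim : Tendsto (fun z => ((-(C * ‖z - x‖) : ℝ) : EReal)) (𝓝[≠] x) (𝓝 0) := by
    rw [← EReal.coe_zero, EReal.tendsto_coe]
    have : Continuous fun z => -(C * ‖z - x‖) := by fun_prop
    have h2 := this.tendsto x
    simp only [sub_self, norm_zero, mul_zero, neg_zero] at h2
    exact h2.mono_left nhdsWithin_le_nhds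
  rcases eq_or_neBot (𝓝[≠] x) with hbot | hne
  · simp [hbot]
  rw [← hlim.liminf_eq]
  refine liminf_le_liminf ?_
  filter_upwards [self_mem_nhdsWithin] with z hz
  have hpos : 0 < ‖z - x‖ := norm_pos_iff.mpr (sub_ne_zero.mpr hz)
  by_cases hzt : f z = ⊤
  · lift f x to ℝ using ⟨hx, hb x⟩ with fx
    rw [hzt, EReal.top_sub_coe, EReal.top_sub_coe, EReal.top_div_of_pos_ne_top
      (by exact_mod_cast hpos) (EReal.coe_ne_top _)]
    exact le_top
  · have h1 := H z hzt
    lift f x to ℝ using ⟨hx, hb x⟩ with fx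
    lift f z to ℝ using ⟨hzt, hb z⟩ with fz
    simp only [EReal.toReal_coe] at h1
    rw [← EReal.coe_sub, ← EReal.coe_sub, ← EReal.coe_div, EReal.coe_le_coe_iff, le_div_iff₀ hpos]
    nlinarith

/-- Theorem 5.2: any accumulation point of the sequence generated by PGSA with
(nonmonotone) line search is a critical point of F. -/
theorem pgsa_line_search_accumulation_point_is_critical
    {n : ℕ} (hn : 1 ≤ n)
    (f : EuclideanSpace ℝ (Fin n) → EReal) (g h : EuclideanSpace ℝ (Fin n) → ℝ)
    (h' : EuclideanSpace ℝ (Fin n) → EuclideanSpace ℝ (Fin n)) (L : ℝ)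
    (hf_ne_bot : ∀ z, f z ≠ ⊥) (hf_proper : ∃ z, f z ≠ ⊤)
    (hf_lsc : LowerSemicontinuous f)
    (hf_bdd : ∃ m : ℝ, ∀ z, (m : EReal) ≤ f z)
    (hf_cont : ContinuousOn f {z | f z ≠ ⊤})
    (hg_cvx : ConvexOn ℝ Set.univ g)
    (hL : 0 < L)
    (hh_grad : ∀ z, HasGradientAt h (h' z) z)
    (hh_lip : LipschitzWith (Real.toNNReal L) h')
    (hΩ : ∃ z, g z ≠ 0)
    (hfh : ∀ z, 0 ≤ f z + ((h z : ℝ) : EReal))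
    (hg_pos : ∀ z, f z ≠ ⊤ → g z ≠ 0 → 0 < g z)
    (hA1 : ∀ z, g z = 0 → f z + ((h z : ℝ) : EReal) ≠ 0)
    (hA2 : ∀ t : ℝ, Bornology.IsBounded {z | Ffrac f g h z ≤ (t : EReal)})
    (a : ℝ) (ha : 0 < a) (N : ℕ) (αlo αhi : ℝ) (hαlo : 0 < αlo) (hαhi : αlo ≤ αhi)
    (x : ℕ → EuclideanSpace ℝ (Fin n))
    (hx0 : g (x 0) ≠ 0 ∧ f (x 0) ≠ ⊤)
    (hiter : ∀ k, ∃ α : ℝ, α ∈ Set.Icc αlo αhi ∧ ∃ y ∈ csub g (x k),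
      x (k + 1) ∈ proxSet (fun z => ((α : ℝ) : EReal) * f z)
        (x k - α • h' (x k) + (α * (Ffrac f g h (x k)).toReal) • y))
    (hdom : ∀ k, g (x (k + 1)) ≠ 0 ∧ f (x (k + 1)) ≠ ⊤)
    (hdec : ∀ k, Ffrac f g h (x (k + 1)) ≤
      (((Finset.Icc (k - N) k).sup' (Finset.nonempty_Icc.mpr (Nat.sub_le k N))
          (fun j => (Ffrac f g h (x j)).toReal) -
        a / 2 * ‖x (k + 1) - x k‖ ^ 2 : ℝ) : EReal)) :
    ∀ xs : EuclideanSpace ℝ (Fin n),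
      (∃ φ : ℕ → ℕ, StrictMono φ ∧ Tendsto (fun j => x (φ j)) atTop (𝓝 xs)) →
      (g xs ≠ 0 ∧ f xs ≠ ⊤) ∧
        ∃ ys ∈ csub g xs, ((Ffrac f g h xs).toReal) • ys - h' xs ∈ fsub f xs := by
  rintro xs ⟨φ, hφ, hφx⟩
  have hgc : Continuous g := hg_cvx.locallyLipschitz.continuous
  have hhc : Continuous h := continuous_iff_continuousAt.mpr fun z =>
    (hh_grad z).hasFDerivAt.continuousAt
  have hh'c : Continuous h' := hh_lip.continuous
  set fr : EuclideanSpace ℝ (Fin n) → ℝ := fun z => (f z).toReal with hfr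
  have hfr_coe : ∀ z, f z ≠ ⊤ → ((fr z : ℝ) : EReal) = f z := fun z hz =>
    EReal.coe_toReal hz (hf_ne_bot z)
  have hfrc : ContinuousOn fr {z | f z ≠ ⊤} := by
    apply EReal.continuousOn_toReal.comp hf_cont
    intro z hz
    simp only [Set.mem_compl_iff, Set.mem_insert_iff, Set.mem_singleton_iff, not_or]
    exact ⟨hf_ne_bot z, hz⟩
  have hfh' : ∀ z, f z ≠ ⊤ → 0 ≤ fr z + h z := by
    intro z hz
    have := hfh z
    rw [← hfr_coe z hz] at this
    exact_mod_cast this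
  set G : EuclideanSpace ℝ (Fin n) → ℝ := fun z => (fr z + h z) / g z with hG
  have hFG : ∀ z, g z ≠ 0 → f z ≠ ⊤ → Ffrac f g h z = ((G z : ℝ) : EReal) := by
    intro z h1 h2
    simp [Ffrac, h1, h2, hG, hfr]
  have hdomx : ∀ k, g (x k) ≠ 0 ∧ f (x k) ≠ ⊤ := by
    intro k
    cases k with
    | zero => exact hx0
    | succ k => exact hdom k
  have hFx : ∀ k, (Ffrac f g h (x k)).toReal = G (x k) := fun k => by
    rw [hFG _ (hdomx k).1 (hdomx k).2, EReal.toReal_coe]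
  have hGnn : ∀ k, 0 ≤ G (x k) := fun k =>
    div_nonneg (hfh' _ (hdomx k).2) (hg_pos _ (hdomx k).2 (hdomx k).1).le
  have haux := nm_aux (fun k => G (x k)) (fun k => a / 2 * ‖x (k + 1) - x k‖ ^ 2) N hGnn
    (fun k => by positivity) (by
      intro k
      have := hdec k
      rw [hFG _ (hdom k).1 (hdom k).2, EReal.coe_le_coe_iff] at this
      simpa only [hFx] using this)
  obtain ⟨hle0, hd0⟩ := haux
  -- the level set
  set S : Set (EuclideanSpace ℝ (Fin n)) := {z | Ffrac f g h z ≤ ((G (x 0) : ℝ) : EReal)} with hS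
  have hSdom : ∀ z ∈ S, g z ≠ 0 ∧ f z ≠ ⊤ := by
    intro z hz
    by_contra hcon
    have : Ffrac f g h z ≤ ((G (x 0) : ℝ) : EReal) := hz
    rw [Ffrac, if_neg hcon] at this
    exact EReal.coe_ne_top _ (top_le_iff.mp this)
  have hST : S = {z | f z ≤ ((G (x 0) * g z - h z : ℝ) : EReal)} := by
    ext z
    constructor
    · intro hz
      obtain ⟨h1, h2⟩ := hSdom z hz
      have hz' : Ffrac f g h z ≤ ((G (x 0) : ℝ) : EReal) := hz
      rw [hFG z h1 h2, EReal.coe_le_coe_iff, hG, div_le_iff₀ (hg_pos z h2 h1)] at hz'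
      show f z ≤ _
      rw [← hfr_coe z h2, EReal.coe_le_coe_iff]
      linarith
    · intro hz
      have hz' : f z ≤ ((G (x 0) * g z - h z : ℝ) : EReal) := hz
      have h2 : f z ≠ ⊤ := ne_top_of_le_ne_top (EReal.coe_ne_top _) hz'
      rw [← hfr_coe z h2, EReal.coe_le_coe_iff] at hz'
      have h1 : g z ≠ 0 := by
        intro h0
        apply hA1 z h0
        rw [h0] at hz'
        have : fr z + h z = 0 := le_antisymm (by linarith) (hfh' z h2)
        rw [← hfr_coe z h2, ← EReal.coe_add, this, EReal.coe_zero]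
      show Ffrac f g h z ≤ _
      rw [hFG z h1 h2, EReal.coe_le_coe_iff, hG]
      show (fr z + h z) / g z ≤ G (x 0)
      rw [div_le_iff₀ (hg_pos z h2 h1)]
      linarith
  have hSclosed : IsClosed S := by
    rw [hST]
    have hc : Continuous fun z => (z, ((G (x 0) * g z - h z : ℝ) : EReal)) := by
      refine continuous_id.prodMk (continuous_coe_real_ereal.comp ?_)
      fun_prop
    exact hf_lsc.isClosed_epigraph.preimage hc
  have hSbdd : Bornology.IsBounded S := hA2 _
  have hScpt : IsCompact S := Metric.isCompact_of_isClosed_isBounded hSclosed hSbdd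
  have hxS : ∀ k, x k ∈ S := fun k => by
    show Ffrac f g h (x k) ≤ _
    rw [hFG _ (hdomx k).1 (hdomx k).2, EReal.coe_le_coe_iff]
    exact hle0 k
  have hfrS : ContinuousOn fr S := hfrc.mono fun z hz => (hSdom z hz).2
  have hGS : ContinuousOn G S :=
    (hfrS.add hhc.continuousOn).div hgc.continuousOn fun z hz => (hSdom z hz).1
  have hGu := Metric.uniformContinuousOn_iff.mp (hScpt.uniformContinuousOn_of_continuous hGS)
  have hd := hd0 (by
    intro ε hε
    obtain ⟨δ, hδ, H⟩ := hGu ε hε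
    refine ⟨a / 2 * δ ^ 2, by positivity, fun k hk => ?_⟩
    have h1 := lt_of_mul_lt_mul_left hk (by positivity)
    have h2 := lt_of_pow_lt_pow_left₀ 2 hδ.le h1
    exact H _ (hxS (k + 1)) _ (hxS k) (by rwa [dist_eq_norm]))
  have hd' : Tendsto (fun k => x (k + 1) - x k) atTop (𝓝 0) := by
    rw [tendsto_zero_iff_norm_tendsto_zero]
    have h1 := (hd.const_mul (2 / a)).sqrt
    simp only [mul_zero, Real.sqrt_zero] at h1
    refine h1.congr fun k => ?_
    rw [← mul_assoc, show 2 / a * (a / 2) = 1 by field_simp, one_mul,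
      Real.sqrt_sq (norm_nonneg _)]
  have hxsS : xs ∈ S := hSclosed.mem_of_tendsto hφx (Eventually.of_forall fun j => hxS _)
  obtain ⟨hgs, hfs⟩ := hSdom xs hxsS
  refine ⟨⟨hgs, hfs⟩, ?_⟩
  choose α hα y hy hprox using hiter
  obtain ⟨B, hB⟩ := csub_bdd g hgc S hSbdd
  have hcpt : IsCompact (Set.Icc αlo αhi ×ˢ Metric.closedBall (0 : EuclideanSpace ℝ (Fin n)) B) :=
    isCompact_Icc.prod (isCompact_closedBall _ _)
  obtain ⟨⟨αs, ys⟩, hmem, ψ, hψ, hψlim⟩ := hcpt.tendsto_subseq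
    (x := fun j => (α (φ j), y (φ j)))
    (fun j => ⟨hα _, by simpa using hB _ (hxS (φ j)) _ (hy (φ j))⟩)
  have hαs : 0 < αs := hαlo.trans_le hmem.1.1
  set θ : ℕ → ℕ := fun j => φ (ψ j) with hθ
  have hθmono : Tendsto θ atTop atTop := (hφ.comp hψ).tendsto_atTop
  have hαl : Tendsto (fun j => α (θ j)) atTop (𝓝 αs) :=
    (continuous_fst.tendsto _).comp hψlim
  have hyl : Tendsto (fun j => y (θ j)) atTop (𝓝 ys) :=
    (continuous_snd.tendsto _).comp hψlim
  have hxl : Tendsto (fun j => x (θ j)) atTop (𝓝 xs) := hφx.comp hψ.tendsto_atTop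
  have hxl1 : Tendsto (fun j => x (θ j + 1)) atTop (𝓝 xs) := by
    have h1 := (hd'.comp hθmono).add hxl
    rw [zero_add] at h1
    exact h1.congr fun j => by simp
  have hGl : Tendsto (fun j => G (x (θ j))) atTop (𝓝 (G xs)) :=
    (hGS xs hxsS).tendsto.comp (tendsto_nhdsWithin_iff.mpr
      ⟨hxl, Eventually.of_forall fun j => hxS _⟩)
  have hfl : Tendsto (fun j => fr (x (θ j + 1))) atTop (𝓝 (fr xs)) :=
    (hfrS xs hxsS).tendsto.comp (tendsto_nhdsWithin_iff.mpr
      ⟨hxl1, Eventually.of_forall fun j => hxS _⟩)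
  have hys : ys ∈ csub g xs := by
    intro z
    refine le_of_tendsto (((hgc.tendsto xs).comp hxl).add (hyl.inner (hxl.const_sub z)))
      (Eventually.of_forall fun j => hy (θ j) z)
  refine ⟨ys, hys, ?_⟩
  rw [hFG xs hgs hfs, EReal.toReal_coe]
  set u : ℕ → EuclideanSpace ℝ (Fin n) := fun j =>
    x (θ j) - α (θ j) • h' (x (θ j)) + (α (θ j) * G (x (θ j))) • y (θ j) with hu
  have hul : Tendsto u atTop (𝓝 (xs - αs • h' xs + (αs * G xs) • ys)) :=
    (hxl.sub (hαl.smul ((hh'c.tendsto xs).comp hxl))).add ((hαl.mul hGl).smul hyl)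
  apply fsub_of_quad f hf_ne_bot xs _ hfs (1 / (2 * αs))
  intro z hz
  have hineq : ∀ j, α (θ j) * fr (x (θ j + 1)) + ‖x (θ j + 1) - u j‖ ^ 2 / 2
      ≤ α (θ j) * fr z + ‖z - u j‖ ^ 2 / 2 := by
    intro j
    have h1 := hprox (θ j) z
    simp only [hFx] at h1
    rw [← hfr_coe z hz, ← hfr_coe _ (hdom (θ j)).2, ← EReal.coe_mul, ← EReal.coe_mul,
      ← EReal.coe_add, ← EReal.coe_add, EReal.coe_le_coe_iff] at h1
    exact h1
  have hlim := le_of_tendsto_of_tendsto'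
    ((hαl.mul hfl).add (((hxl1.sub hul).norm.pow 2).div_const 2))
    ((hαl.mul_const (fr z)).add (((hul.const_sub z).norm.pow 2).div_const 2)) hineq
  set v := G xs • ys - h' xs with hv
  have e1 : xs - (xs - αs • h' xs + (αs * G xs) • ys) = -(αs • v) := by
    rw [hv, smul_sub, smul_smul]; abel
  have e2 : z - (xs - αs • h' xs + (αs * G xs) • ys) = (z - xs) - αs • v := by
    rw [hv, smul_sub, smul_smul]; abel
  rw [e1, e2, norm_neg, norm_sub_sq_real, inner_smul_right, real_inner_comm] at hlim
  have h3 : αs * (fr xs + ⟪v, z - xs⟫ - 1 / (2 * αs) * ‖z - xs‖ ^ 2) ≤ αs * fr z := by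
    have : αs * (1 / (2 * αs) * ‖z - xs‖ ^ 2) = ‖z - xs‖ ^ 2 / 2 := by field_simp
    rw [mul_sub, mul_add, this]
    linarith
  exact le_of_mul_le_mul_left h3 hαs
end
end

section
/- Let x ∈ C and Λ := supp(x). Then: (i) if ‖x‖₀ < r then ∂̂ι_C(x) = {t·x : t ∈ ℝ}, while if ‖x‖₀ = r then ∂̂ι_C(x) = {v ∈ ℝⁿ : there exists t ∈ ℝ with v_i = t·x_i for all i ∈ Λ}; (ii) for every v in the limiting subdifferential ∂ι_C(x) there exists t ∈ ℝ with v_i = t·x_i for all i ∈ Λ; (iii) if r = n (so that C is the Euclidean unit sphere) then ∂̂ι_C(x) = ∂ι_C(x) = {t·x : t ∈ ℝ}. -/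
open Filter Topology
open scoped RealInnerProductSpace

noncomputable section

/-- The support of a vector, as a finset. -/
def suppF {n : ℕ} (x : EuclideanSpace ℝ (Fin n)) : Finset (Fin n) :=
  Finset.univ.filter (fun i => x i ≠ 0)

/-- The sparse unit sphere C = {x : ℝⁿ | ‖x‖₀ ≤ r, ‖x‖₂ = 1}. -/
def sphC (n r : ℕ) : Set (EuclideanSpace ℝ (Fin n)) :=
  {x | (suppF x).card ≤ r ∧ ‖x‖ = 1}

open Classical in
/-- The indicator function of C, with values in EReal. -/
def indC (n r : ℕ) : EuclideanSpace ℝ (Fin n) → EReal :=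
  fun x => if x ∈ sphC n r then 0 else ⊤

theorem aux_quot_mem {n r : ℕ} {x v z : EuclideanSpace ℝ (Fin n)} (hx : x ∈ sphC n r)
    (hz : z ∈ sphC n r) :
    (indC n r z - indC n r x - ((⟪v, z - x⟫ : ℝ) : EReal)) / ((‖z - x‖ : ℝ) : EReal)
      = ((-⟪v, z - x⟫ / ‖z - x‖ : ℝ) : EReal) := by
  simp only [indC, hx, hz, if_true]
  rw [EReal.coe_div, EReal.coe_neg]
  simp

theorem aux_quot_notMem {n r : ℕ} {x v z : EuclideanSpace ℝ (Fin n)} (hx : x ∈ sphC n r)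
    (hz : z ∉ sphC n r) :
    (indC n r z - indC n r x - ((⟪v, z - x⟫ : ℝ) : EReal)) / ((‖z - x‖ : ℝ) : EReal) = ⊤ := by
  have hne : 0 < ‖z - x‖ := by
    rw [norm_pos_iff, sub_ne_zero]
    rintro rfl
    exact hz hx
  simp only [indC, hx, hz, if_true, if_false, sub_zero, EReal.top_sub_coe]
  exact EReal.top_div_of_pos_ne_top (by exact_mod_cast hne) (EReal.coe_ne_top _)

theorem aux_mem_fsub {n r : ℕ} {x v : EuclideanSpace ℝ (Fin n)} :
    v ∈ fsub (indC n r) x ↔ x ∈ sphC n r ∧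
      ∀ ε : ℝ, 0 < ε → ∀ᶠ z in 𝓝 x, z ∈ sphC n r → ⟪v, z - x⟫ ≤ ε * ‖z - x‖ := by
  constructor
  · rintro ⟨h1, h2⟩
    have hx : x ∈ sphC n r := by
      by_contra hx
      exact h1 (by simp [indC, hx])
    refine ⟨hx, fun ε hε => ?_⟩
    have h3 : ((-ε : ℝ) : EReal) < 0 := by
      exact_mod_cast (neg_lt_zero.2 hε)
    have h4 := eventually_lt_of_lt_liminf (lt_of_lt_of_le h3 h2)
    rw [eventually_nhdsWithin_iff] at h4
    filter_upwards [h4] with z hz hzC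
    by_cases hzx : z = x
    · subst hzx; simp
    have h5 := hz hzx
    rw [aux_quot_mem hx hzC] at h5
    have h6 : -ε < -⟪v, z - x⟫ / ‖z - x‖ := by exact_mod_cast h5
    have hne : 0 < ‖z - x‖ := by rwa [norm_pos_iff, sub_ne_zero]
    rw [lt_div_iff₀ hne] at h6
    linarith
  · rintro ⟨hx, h⟩
    refine ⟨by simp [indC, hx], ?_⟩
    refine le_of_forall_lt fun c hc => ?_
    obtain ⟨e, he1, he2⟩ := EReal.lt_iff_exists_real_btwn.1 hc
    refine lt_of_lt_of_le he1 ?_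
    have he : e < 0 := by exact_mod_cast he2
    refine le_liminf_of_le (by isBoundedDefault) ?_
    rw [eventually_nhdsWithin_iff]
    filter_upwards [h (-e) (by linarith)] with z hz hzx
    by_cases hzC : z ∈ sphC n r
    · rw [aux_quot_mem hx hzC]
      have hne : 0 < ‖z - x‖ := by rw [norm_pos_iff, sub_ne_zero]; exact hzx
      have := hz hzC
      have h6 : e ≤ -⟪v, z - x⟫ / ‖z - x‖ := by
        rw [le_div_iff₀ hne]; linarith
      exact_mod_cast h6
    · rw [aux_quot_notMem hx hzC]; exact le_top

theorem aux_inner {n : ℕ} {x z : EuclideanSpace ℝ (Fin n)} (hx : ‖x‖ = 1) (hz : ‖z‖ = 1) :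
    ⟪x, z - x⟫ = -(‖z - x‖ ^ 2 / 2) := by
  rw [norm_sub_sq_real, inner_sub_right, real_inner_self_eq_norm_sq, hx, hz, real_inner_comm]
  ring

theorem aux_small {n : ℕ} (x : EuclideanSpace ℝ (Fin n)) (t : ℝ) {ε : ℝ} (hε : 0 < ε) :
    ∀ᶠ z in 𝓝 x, |t| * ‖z - x‖ ≤ ε := by
  have : Tendsto (fun z : EuclideanSpace ℝ (Fin n) => |t| * ‖z - x‖) (𝓝 x) (𝓝 0) := by
    have h : ContinuousAt (fun z : EuclideanSpace ℝ (Fin n) => |t| * ‖z - x‖) x := by fun_prop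
    simpa [ContinuousAt] using h
  exact (this.eventually (gt_mem_nhds hε)).mono fun z hz => hz.le

theorem aux_le {n : ℕ} {x z : EuclideanSpace ℝ (Fin n)} (hx : ‖x‖ = 1) (hz : ‖z‖ = 1)
    {t ε : ℝ} (h : |t| * ‖z - x‖ ≤ ε) : t * ⟪x, z - x⟫ ≤ ε * ‖z - x‖ := by
  rw [aux_inner hx hz]
  have h0 := norm_nonneg (z - x)
  have h1 : -t ≤ |t| := neg_le_abs t
  have h2 : |t| * ‖z - x‖ * ‖z - x‖ ≤ ε * ‖z - x‖ := mul_le_mul_of_nonneg_right h h0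
  have h3 : 0 ≤ (|t| + t) * ‖z - x‖ ^ 2 := mul_nonneg (by linarith) (sq_nonneg _)
  have h4 : 0 ≤ |t| * ‖z - x‖ ^ 2 := by positivity
  nlinarith

theorem aux_fsub_of {n r : ℕ} {x v : EuclideanSpace ℝ (Fin n)} (hx : x ∈ sphC n r) (t : ℝ)
    (h : ∀ᶠ z in 𝓝 x, z ∈ sphC n r → ⟪v, z - x⟫ = t * ⟪x, z - x⟫) :
    v ∈ fsub (indC n r) x := by
  rw [aux_mem_fsub]
  refine ⟨hx, fun ε hε => ?_⟩
  filter_upwards [h, aux_small x t hε] with z hz hz2 hzC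
  rw [hz hzC]
  exact aux_le hx.2 hzC.2 hz2

theorem aux_smul_mem {n r : ℕ} {x : EuclideanSpace ℝ (Fin n)} (hx : x ∈ sphC n r) (t : ℝ) :
    t • x ∈ fsub (indC n r) x :=
  aux_fsub_of hx t (Eventually.of_forall fun z _ => by rw [real_inner_smul_left])

theorem aux_coord {n r : ℕ} {x v : EuclideanSpace ℝ (Fin n)} (hv : v ∈ fsub (indC n r) x)
    (j : Fin n) (hj : (insert j (suppF x)).card ≤ r) : v j = ⟪v, x⟫ * x j := by
  rw [aux_mem_fsub] at hv
  obtain ⟨hx, hv⟩ := hv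
  set t := ⟪v, x⟫ with ht
  set e : EuclideanSpace ℝ (Fin n) := EuclideanSpace.single j (1 : ℝ) with he
  have hen : ‖e‖ = 1 := by simp [he]
  have hx1 := hx.2
  have hwe : ⟪v - t • x, e⟫ = v j - t * x j := by
    simp [he, EuclideanSpace.inner_single_right]
  have hwx : ⟪v - t • x, x⟫ = 0 := by
    rw [inner_sub_left, real_inner_smul_left, real_inner_self_eq_norm_sq, hx1, ← ht]; ring
  set a := v j - t * x j with ha
  set c : ℝ → EuclideanSpace ℝ (Fin n) := fun s => ‖x + s • e‖⁻¹ • (x + s • e) with hc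
  have hc0 : c 0 = x := by simp [hc, hx1]
  have hcont : Tendsto c (𝓝 0) (𝓝 x) := by
    have : ContinuousAt c 0 := by
      have q1 : ContinuousAt (fun s : ℝ => x + s • e) 0 := by fun_prop
      have q2 : ContinuousAt (fun s : ℝ => ‖x + s • e‖⁻¹) 0 :=
        ContinuousAt.inv₀ q1.norm (by simp [hx1])
      exact q2.smul q1
    rw [ContinuousAt, hc0] at this
    exact this
  have hpos : ∀ᶠ s : ℝ in 𝓝 0, 0 < ‖x + s • e‖ := by
    have : ContinuousAt (fun s : ℝ => ‖x + s • e‖) 0 := by fun_prop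
    exact this.eventually (lt_mem_nhds (by simp [hx1]))
  have key : ∀ ε : ℝ, 0 < ε → ∀ᶠ s : ℝ in 𝓝 0, s * a ≤ 4 * ε * |s| := by
    intro ε hε
    have h1 := hcont.eventually ((hv ε hε).and (aux_small x (-t) hε))
    filter_upwards [h1, hpos] with s hs hN
    set N := ‖x + s • e‖ with hNdef
    have hcC : c s ∈ sphC n r := by
      constructor
      · refine le_trans (Finset.card_le_card ?_) hj
        intro i hi
        simp only [suppF, Finset.mem_filter, Finset.mem_univ, true_and, Finset.mem_insert] at hi ⊢
        by_contra hcon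
        push Not at hcon
        apply hi
        simp [hc, he, hcon.1, hcon.2]
      · simp only [hc]
        rw [norm_smul, norm_inv, norm_norm]
        exact inv_mul_cancel₀ hN.ne'
    have h2 := hs.1 hcC
    have h3 := aux_le hx1 hcC.2 hs.2
    have h4 : ⟪v - t • x, c s - x⟫ ≤ 2 * ε * ‖c s - x‖ := by
      rw [inner_sub_left, real_inner_smul_left]; linarith
    have h5 : ⟪v - t • x, c s - x⟫ = N⁻¹ * (s * a) := by
      simp only [hc]
      rw [inner_sub_right, hwx, real_inner_smul_right, inner_add_right, hwx,
        real_inner_smul_right, hwe]; ring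
    have h6 : c s - x = N⁻¹ • (s • e + (1 - N) • x) := by
      have h61 : N⁻¹ • (N • x) = x := by rw [smul_smul, inv_mul_cancel₀ hN.ne', one_smul]
      have h62 : s • e + (1 - N) • x = (x + s • e) - N • x := by module
      rw [h62, smul_sub, h61]
    have h7 : |1 - N| ≤ |s| := by
      have := abs_norm_sub_norm_le x (x + s • e)
      rw [hx1] at this
      simpa [norm_smul, hen] using this
    have h8 : ‖s • e + (1 - N) • x‖ ≤ 2 * |s| := by
      refine (norm_add_le _ _).trans ?_
      rw [norm_smul, norm_smul, hen, hx1, Real.norm_eq_abs, Real.norm_eq_abs]; linarith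
    rw [h5, h6, norm_smul, norm_inv, Real.norm_eq_abs, abs_of_pos hN] at h4
    have h9 : N⁻¹ * (s * a) ≤ N⁻¹ * (2 * ε * ‖s • e + (1 - N) • x‖) := by linarith
    have h10 := le_of_mul_le_mul_left h9 (inv_pos.2 hN)
    nlinarith
  have hle : ∀ ε : ℝ, 0 < ε → |a| ≤ 4 * ε := by
    intro ε hε
    obtain ⟨δ, hδ, hb⟩ := Metric.eventually_nhds_iff.1 (key ε hε)
    have p1 := @hb (δ / 2) (by rw [Real.dist_eq, sub_zero, abs_of_pos (by linarith)]; linarith)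
    have p2 := @hb (-(δ / 2))
      (by rw [Real.dist_eq, sub_zero, abs_neg, abs_of_pos (by linarith)]; linarith)
    rw [abs_neg] at p2
    rw [abs_of_pos (by linarith)] at p1 p2
    rw [abs_le]
    constructor <;> nlinarith
  have ha0 : |a| ≤ 0 := by
    refine le_of_forall_pos_le_add fun ε hε => ?_
    have := hle (ε / 4) (by linarith)
    linarith
  have := abs_nonpos_iff.1 ha0
  linarith

theorem aux_coord_mem {n r : ℕ} {x v : EuclideanSpace ℝ (Fin n)} (hv : v ∈ fsub (indC n r) x)
    (j : Fin n) (hj : j ∈ suppF x) : v j = ⟪v, x⟫ * x j := by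
  refine aux_coord hv j ?_
  rw [Finset.insert_eq_of_mem hj]
  exact (aux_mem_fsub.1 hv).1.1

theorem aux_supp_subset {n : ℕ} (x : EuclideanSpace ℝ (Fin n)) :
    ∀ᶠ z in 𝓝 x, suppF x ⊆ suppF z := by
  have : ∀ i ∈ suppF x, ∀ᶠ z : EuclideanSpace ℝ (Fin n) in 𝓝 x, z i ≠ 0 := by
    intro i hi
    have hi' : x i ≠ 0 := by simpa [suppF] using hi
    have hcont : ContinuousAt (fun z : EuclideanSpace ℝ (Fin n) => z i) x := by fun_prop
    exact hcont.eventually_ne hi'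
  have h2 := (Filter.eventually_all_finset (suppF x)).2 this
  filter_upwards [h2] with z hz i hi
  simpa [suppF] using hz i hi

theorem aux_limit {n : ℕ} {x v : EuclideanSpace ℝ (Fin n)} {u w : ℕ → EuclideanSpace ℝ (Fin n)}
    (hu : Tendsto u atTop (𝓝 x)) (hw : Tendsto w atTop (𝓝 v)) (i : Fin n)
    (h : ∀ᶠ k in atTop, w k i = ⟪w k, u k⟫ * u k i) : v i = ⟪v, x⟫ * x i := by
  have hp : Continuous (fun z : EuclideanSpace ℝ (Fin n) => z i) := by fun_prop
  have h1 : Tendsto (fun k => w k i) atTop (𝓝 (v i)) := (hp.tendsto v).comp hw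
  have h2 : Tendsto (fun k => u k i) atTop (𝓝 (x i)) := (hp.tendsto x).comp hu
  exact tendsto_nhds_unique (h1.congr' h) ((hw.inner hu).mul h2)

/-- Lemma 6.1: the Fréchet and limiting subdifferentials of the indicator of the
sparse unit sphere C. -/
theorem subdifferential_of_sparse_sphere_indicator
    {n : ℕ} (r : ℕ) (hr1 : 1 ≤ r) (hrn : r ≤ n)
    (x : EuclideanSpace ℝ (Fin n)) (hx : x ∈ sphC n r) :
    (((suppF x).card < r → fsub (indC n r) x = {v | ∃ t : ℝ, v = t • x}) ∧
      ((suppF x).card = r →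
        fsub (indC n r) x = {v | ∃ t : ℝ, ∀ i ∈ suppF x, v i = t * x i})) ∧
    (∀ v ∈ lsub (indC n r) x, ∃ t : ℝ, ∀ i ∈ suppF x, v i = t * x i) ∧
    (r = n →
      fsub (indC n r) x = {v | ∃ t : ℝ, v = t • x} ∧
      lsub (indC n r) x = {v | ∃ t : ℝ, v = t • x}) := by
  have hfull : (∀ j : Fin n, (insert j (suppF x)).card ≤ r) →
      fsub (indC n r) x = {v | ∃ t : ℝ, v = t • x} := by
    intro hj
    ext v
    constructor
    · intro hv
      refine ⟨⟪v, x⟫, ?_⟩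
      ext j
      simpa using aux_coord hv j (hj j)
    · rintro ⟨t, rfl⟩
      exact aux_smul_mem hx t
  refine ⟨⟨fun hlt => hfull fun j => (Finset.card_insert_le _ _).trans hlt, fun heq => ?_⟩, ?_, ?_⟩
  · ext v
    constructor
    · intro hv
      exact ⟨⟪v, x⟫, fun i hi => aux_coord_mem hv i hi⟩
    · rintro ⟨t, ht⟩
      refine aux_fsub_of hx t ?_
      filter_upwards [aux_supp_subset x] with z hz hzC
      have hs : suppF x = suppF z := Finset.eq_of_subset_of_card_le hz (by rw [heq]; exact hzC.1)
      rw [← real_inner_smul_left, PiLp.inner_apply, PiLp.inner_apply]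
      refine Finset.sum_congr rfl fun i _ => ?_
      by_cases hi : i ∈ suppF x
      · simp [ht i hi]
      · have h1 : x i = 0 := by simpa [suppF] using hi
        have h2 : z i = 0 := by rw [hs] at hi; simpa [suppF] using hi
        simp [h1, h2]
  · rintro v ⟨u, w, hu, -, hm, hw⟩
    refine ⟨⟪v, x⟫, fun i hi => aux_limit hu hw i ?_⟩
    filter_upwards [hu.eventually (aux_supp_subset x)] with k hk
    exact aux_coord_mem (hm k) i (hk hi)
  · intro hrn'
    have hcard : ∀ (y : EuclideanSpace ℝ (Fin n)) (j : Fin n), (insert j (suppF y)).card ≤ r := by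
      intro y j
      rw [hrn']
      simpa using Finset.card_le_univ (insert j (suppF y))
    refine ⟨hfull (hcard x), ?_⟩
    ext v
    constructor
    · rintro ⟨u, w, hu, -, hm, hw⟩
      refine ⟨⟪v, x⟫, ?_⟩
      ext j
      have := aux_limit hu hw j (Eventually.of_forall fun k => aux_coord (hm k) j (hcard _ j))
      simpa using this
    · rintro ⟨t, rfl⟩
      exact ⟨fun _ => x, fun _ => t • x, tendsto_const_nhds, tendsto_const_nhds,
        fun _ => aux_smul_mem hx t, tendsto_const_nhds⟩
end
end

section
/- Let x⋆ ∈ dom(G) and Λ := supp(x⋆). Then 0 ∈ ∂̂ι_C(x⋆) + 2Bx⋆ − 2G(x⋆)·Ax⋆ (i.e., x⋆ is a critical point of G) if and only if one of the following holds: (i) |Λ| < r and Bx⋆ = G(x⋆)·Ax⋆ (x⋆ is a unit generalized eigenvector of the pair (A,B) with generalized eigenvalue 1/G(x⋆)); (ii) |Λ| = r and B_Λ·x⋆_Λ = G(x⋆)·A_Λ·x⋆_Λ (x⋆_Λ is a unit generalized eigenvector of the pair (A_Λ, B_Λ)). -/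
open Filter Topology
open scoped RealInnerProductSpace

noncomputable section

/-- Matrix-vector product, as a map on Euclidean space. -/
def mvec {n : ℕ} (M : Matrix (Fin n) (Fin n) ℝ) (x : EuclideanSpace ℝ (Fin n)) :
    EuclideanSpace ℝ (Fin n) :=
  (EuclideanSpace.equiv (Fin n) ℝ).symm (M.mulVec (EuclideanSpace.equiv (Fin n) ℝ x))

/-- The quadratic form xᵀMx. -/
def qf {n : ℕ} (M : Matrix (Fin n) (Fin n) ℝ) (x : EuclideanSpace ℝ (Fin n)) : ℝ :=
  ∑ i, ∑ j, x i * M i j * x j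

open Classical in
/-- The objective G of the sparse generalized eigenvalue problem (formulation (6.4)). -/
def Gfun {n : ℕ} (r : ℕ) (A B : Matrix (Fin n) (Fin n) ℝ) :
    EuclideanSpace ℝ (Fin n) → EReal :=
  fun x => if x ∈ sphC n r ∧ qf A x ≠ 0 then ((qf B x / qf A x : ℝ) : EReal) else ⊤

lemma mem_fsub_ind {n r : ℕ} {x y : EuclideanSpace ℝ (Fin n)} (hx : x ∈ sphC n r) :
    y ∈ fsub (indC n r) x ↔
      ∀ ε : ℝ, 0 < ε → ∀ᶠ z in 𝓝 x, z ∈ sphC n r → ⟪y, z - x⟫ ≤ ε * ‖z - x‖ := by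
  have h0 : indC n r x = 0 := by simp [indC, hx]
  have key : y ∈ fsub (indC n r) x ↔ ∀ b : EReal, b < 0 → ∀ᶠ z in 𝓝[≠] x,
      b < (indC n r z - indC n r x - ((⟪y, z - x⟫ : ℝ) : EReal)) / ((‖z - x‖ : ℝ) : EReal) := by
    unfold fsub
    rw [Set.mem_setOf_eq, le_liminf_iff]
    simp [h0]
  rw [key]
  have val : ∀ z, z ∈ sphC n r →
      (indC n r z - indC n r x - ((⟪y, z - x⟫ : ℝ) : EReal)) / ((‖z - x‖ : ℝ) : EReal)
        = ((-⟪y, z - x⟫ / ‖z - x‖ : ℝ) : EReal) := by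
    intro z hz
    have : indC n r z = 0 := by simp [indC, hz]
    rw [this, h0, EReal.coe_div, EReal.coe_neg]
    simp
  constructor
  · intro h ε hε
    have h1 := h ((-ε : ℝ) : EReal) (by exact_mod_cast (by linarith : -ε < 0))
    rw [eventually_nhdsWithin_iff] at h1
    filter_upwards [h1] with z hz hzC
    by_cases hzx : z = x
    · simp [hzx]
    have h2 := hz hzx
    rw [val z hzC, EReal.coe_lt_coe_iff] at h2
    have hp : 0 < ‖z - x‖ := norm_pos_iff.2 (sub_ne_zero.2 hzx)
    rw [lt_div_iff₀ hp] at h2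
    linarith
  · intro h b hb
    obtain ⟨q, hbq, hq⟩ := EReal.lt_iff_exists_real_btwn.1 hb
    have hq' : q < 0 := by exact_mod_cast hq
    rw [eventually_nhdsWithin_iff]
    filter_upwards [h (-q) (by linarith)] with z hz hzx
    have hp : 0 < ‖z - x‖ := norm_pos_iff.2 (sub_ne_zero.2 hzx)
    refine lt_of_lt_of_le hbq ?_
    by_cases hzC : z ∈ sphC n r
    · rw [val z hzC, EReal.coe_le_coe_iff, le_div_iff₀ hp]
      have := hz hzC
      linarith
    · have : indC n r z = ⊤ := by simp [indC, hzC]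
      rw [this, h0]
      have e : (⊤ : EReal) - 0 - ((⟪y, z - x⟫ : ℝ) : EReal) = ⊤ := by
        simp
      rw [e, EReal.top_div_of_pos_ne_top (by exact_mod_cast hp) (EReal.coe_ne_top _)]
      exact le_top

lemma dir_le {n r : ℕ} {x y d : EuclideanSpace ℝ (Fin n)} (hx : x ∈ sphC n r)
    (hy : y ∈ fsub (indC n r) x) (hyx : ⟪y, x⟫ = 0) (hd : ⟪x, d⟫ = 0)
    (S : Finset (Fin n)) (hS : S.card ≤ r) (hxS : ∀ j, j ∉ S → x j = 0)
    (hdS : ∀ j, j ∉ S → d j = 0) : ⟪y, d⟫ ≤ 0 := by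
  rw [mem_fsub_ind hx] at hy
  set D := ‖d‖ with hD
  have hD0 : 0 ≤ D := norm_nonneg _
  have hx1 : ‖x‖ = 1 := hx.2
  let z : ℝ → EuclideanSpace ℝ (Fin n) := fun t =>
    ((1 - t^2 * D^2) / (1 + t^2 * D^2)) • x + (2 * t / (1 + t^2 * D^2)) • d
  have hpos : ∀ t : ℝ, 0 < 1 + t^2 * D^2 := fun t => by positivity
  have hz0 : z 0 = x := by simp [z]
  have hcont : Continuous z := by
    have h := fun t => (hpos t).ne'
    fun_prop (disch := assumption)
  have hnorm : ∀ a b : ℝ, ‖a • x + b • d‖^2 = a^2 + b^2 * D^2 := by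
    intro a b
    rw [norm_add_sq_real, norm_smul, norm_smul, inner_smul_left, inner_smul_right, hd, hx1,
      mul_pow, mul_pow]
    simp [hD]
  have hzC : ∀ t, z t ∈ sphC n r := by
    intro t
    refine ⟨le_trans (Finset.card_le_card ?_) hS, ?_⟩
    · intro j hj
      by_contra hjS
      rw [suppF, Finset.mem_filter] at hj
      exact hj.2 (by simp [z, hxS j hjS, hdS j hjS])
    · have h2 : ‖z t‖^2 = 1 := by
        simp only [z]
        rw [hnorm]
        have := (hpos t).ne'
        field_simp
        ring
      nlinarith [norm_nonneg (z t)]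
  have hzx : ∀ t, z t - x = (- (2 * t^2 * D^2) / (1 + t^2 * D^2)) • x
      + (2 * t / (1 + t^2 * D^2)) • d := by
    intro t
    have : (1 - t^2 * D^2) / (1 + t^2 * D^2) = 1 + (- (2 * t^2 * D^2) / (1 + t^2 * D^2)) := by
      have := (hpos t).ne'
      field_simp
      ring
    simp only [z]
    rw [this, add_smul, one_smul]
    abel
  have hle : ∀ t, 0 ≤ t → ‖z t - x‖ ≤ 2 * t * D := by
    intro t ht
    refine abs_le_of_sq_le_sq' ?_ (by positivity) |>.2
    rw [hzx, hnorm]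
    have hp := hpos t
    have : (-(2 * t ^ 2 * D ^ 2) / (1 + t ^ 2 * D ^ 2)) ^ 2 + (2 * t / (1 + t ^ 2 * D ^ 2)) ^ 2 * D ^ 2
      = (2 * t * D)^2 / (1 + t^2 * D^2) := by
      have := hp.ne'
      field_simp
      ring
    rw [this]
    apply div_le_self (by positivity)
    have : 0 ≤ t^2 * D^2 := by positivity
    linarith
  have hin : ∀ t, ⟪y, z t - x⟫ = 2 * t / (1 + t^2 * D^2) * ⟪y, d⟫ := by
    intro t
    rw [hzx, inner_add_right, inner_smul_right, inner_smul_right, hyx]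
    ring
  have hmain : ∀ ε : ℝ, 0 < ε → ⟪y, d⟫ ≤ ε * (D * (1 + D^2)) := by
    intro ε hε
    have h1 := hy ε hε
    have ht : Tendsto z (𝓝[>] 0) (𝓝 x) := by
      have := hcont.tendsto 0
      rw [hz0] at this
      exact this.mono_left nhdsWithin_le_nhds
    have h2 := ht.eventually h1
    have h3 : ∀ᶠ t : ℝ in 𝓝[>] 0, t ∈ Set.Ioo (0:ℝ) 1 := Ioo_mem_nhdsGT one_pos
    obtain ⟨t, ht2, ht0, ht1⟩ := (h2.and h3).exists
    have h4 := ht2 (hzC t)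
    rw [hin] at h4
    have h5 : 2 * t / (1 + t^2 * D^2) * ⟪y, d⟫ ≤ ε * (2 * t * D) :=
      h4.trans (mul_le_mul_of_nonneg_left (hle t ht0.le) hε.le)
    rw [div_mul_eq_mul_div, div_le_iff₀ (hpos t)] at h5
    have h6 : ⟪y, d⟫ ≤ ε * D * (1 + t^2 * D^2) := by
      have : 2 * t * ⟪y, d⟫ ≤ 2 * t * (ε * D * (1 + t^2 * D^2)) := by linarith
      exact le_of_mul_le_mul_left this (by linarith)
    have h7 : t^2 * D^2 ≤ 1 * D^2 := mul_le_mul_of_nonneg_right (by nlinarith) (by positivity)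
    have h8 : ε * D * (1 + t^2 * D^2) ≤ ε * D * (1 + D^2) :=
      mul_le_mul_of_nonneg_left (by linarith) (by positivity)
    linarith
  have hK : 0 < D * (1 + D^2) + 1 := by positivity
  by_contra hcon
  push Not at hcon
  have := hmain (⟪y, d⟫ / (D * (1 + D^2) + 1)) (by positivity)
  rw [div_mul_eq_mul_div, le_div_iff₀ hK] at this
  nlinarith

lemma coord_zero {n r : ℕ} {x y : EuclideanSpace ℝ (Fin n)} (hx : x ∈ sphC n r)
    (hy : y ∈ fsub (indC n r) x) (hyx : ⟪y, x⟫ = 0) (i : Fin n)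
    (hi : (insert i (suppF x)).card ≤ r) : y i = 0 := by
  set d : EuclideanSpace ℝ (Fin n) := EuclideanSpace.single i (1:ℝ) - x i • x with hd
  have hyd : ⟪y, d⟫ = y i := by
    rw [hd, inner_sub_right, inner_smul_right, hyx, EuclideanSpace.inner_single_right]
    simp
  have hxd : ⟪x, d⟫ = 0 := by
    rw [hd, inner_sub_right, inner_smul_right, real_inner_self_eq_norm_sq, hx.2,
      EuclideanSpace.inner_single_right]
    simp
  have hxS : ∀ j, j ∉ insert i (suppF x) → x j = 0 := by
    intro j hj
    simp [suppF] at hj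
    exact hj.2
  have hdS : ∀ j, j ∉ insert i (suppF x) → d j = 0 := by
    intro j hj
    have h1 := hxS j hj
    have h2 : j ≠ i := by
      rintro rfl
      simp at hj
    simp [hd, h1, h2]
  have h1 := dir_le hx hy hyx hxd _ hi hxS hdS
  have h2 := dir_le (d := -d) hx hy hyx (by rw [inner_neg_right, hxd, neg_zero]) _ hi hxS
    (by intro j hj; simp [hdS j hj])
  rw [inner_neg_right] at h2
  linarith

lemma mem_of_coord {n r : ℕ} {x y : EuclideanSpace ℝ (Fin n)} (hx : x ∈ sphC n r)
    (hcard : (suppF x).card = r) (hy : ∀ i ∈ suppF x, y i = 0) :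
    y ∈ fsub (indC n r) x := by
  rw [mem_fsub_ind hx]
  intro ε hε
  have h1 : ∀ᶠ z : EuclideanSpace ℝ (Fin n) in 𝓝 x, ∀ i ∈ suppF x, z i ≠ 0 := by
    rw [Filter.eventually_all_finset]
    intro i hi
    have hc : Continuous fun z : EuclideanSpace ℝ (Fin n) => z i := by fun_prop
    exact hc.continuousAt.eventually_ne (by simpa [suppF] using hi)
  filter_upwards [h1] with z hz hzC
  have hsub : suppF x ⊆ suppF z := fun i hi => by
    simpa [suppF] using hz i hi
  have heq : suppF x = suppF z := Finset.eq_of_subset_of_card_le hsub (by rw [hcard]; exact hzC.1)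
  have : ⟪y, z - x⟫ = 0 := by
    rw [PiLp.inner_apply]
    apply Finset.sum_eq_zero
    intro i _
    by_cases hi : i ∈ suppF x
    · simp [hy i hi]
    · have hi' := hi
      rw [heq] at hi'
      simp [suppF] at hi hi'
      simp [hi, hi']
  rw [this]
  positivity

lemma mvec_apply {n : ℕ} (M : Matrix (Fin n) (Fin n) ℝ) (x : EuclideanSpace ℝ (Fin n))
    (i : Fin n) : mvec M x i = ∑ j, M i j * x j := by
  simp [mvec, Matrix.mulVec, dotProduct]

lemma mvec_apply_supp {n : ℕ} (M : Matrix (Fin n) (Fin n) ℝ) (x : EuclideanSpace ℝ (Fin n))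
    (i : Fin n) : mvec M x i = ∑ j ∈ suppF x, M i j * x j := by
  rw [mvec_apply]
  symm
  apply Finset.sum_subset (Finset.subset_univ _)
  intro j _ hj
  simp [suppF] at hj
  simp [hj]

lemma inner_mvec {n : ℕ} (M : Matrix (Fin n) (Fin n) ℝ) (x : EuclideanSpace ℝ (Fin n)) :
    ⟪mvec M x, x⟫ = qf M x := by
  rw [PiLp.inner_apply]
  unfold qf
  refine Finset.sum_congr rfl fun i _ => ?_
  rw [mvec_apply]
  simp only [RCLike.inner_apply, conj_trivial, Finset.mul_sum]
  exact Finset.sum_congr rfl fun j _ => by ring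

/-- Proposition 6.2: characterization of critical points of G as (sub)generalized
eigenvectors of the pair (A,B). -/
theorem critical_points_of_sparse_generalized_eigenproblem
    {n : ℕ} (r : ℕ) (hr1 : 1 ≤ r) (hrn : r ≤ n)
    (A B : Matrix (Fin n) (Fin n) ℝ)
    (hA : A.PosSemidef) (hB : B.PosSemidef)
    (hBr : ∀ Λ : Finset (Fin n), Λ.card = r →
      (B.submatrix (fun i : Λ => (i : Fin n)) (fun i : Λ => (i : Fin n))).PosDef)
    (xs : EuclideanSpace ℝ (Fin n)) (hxs : xs ∈ sphC n r ∧ qf A xs ≠ 0)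
    (c : ℝ) (hc : c = (Gfun r A B xs).toReal) :
    (∃ v ∈ fsub (indC n r) xs,
        v + (2 : ℝ) • mvec B xs - (2 * c) • mvec A xs = 0) ↔
      (((suppF xs).card < r ∧ mvec B xs = c • mvec A xs) ∨
        ((suppF xs).card = r ∧ ∀ i ∈ suppF xs,
          (∑ j ∈ suppF xs, B i j * xs j) = c * ∑ j ∈ suppF xs, A i j * xs j)) := by
  have hx := hxs.1
  have hcv : c = qf B xs / qf A xs := by
    rw [hc, Gfun, if_pos hxs, EReal.toReal_coe]
  constructor
  · rintro ⟨v, hv, hveq⟩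
    have hv' : v = (2 * c) • mvec A xs - (2 : ℝ) • mvec B xs := by
      rw [← sub_eq_zero, ← hveq]
      abel
    have hvx : ⟪v, xs⟫ = 0 := by
      rw [hv', inner_sub_left, inner_smul_left, inner_smul_left, inner_mvec, inner_mvec, hcv]
      have := hxs.2
      simp
      field_simp
      ring
    have hvi : ∀ i, v i = 2 * c * mvec A xs i - 2 * mvec B xs i := by
      intro i
      simp [hv']
    rcases lt_or_eq_of_le hx.1 with hlt | heq
    · left
      refine ⟨hlt, ?_⟩
      ext i
      have h := coord_zero hx hv hvx i ((Finset.card_insert_le _ _).trans hlt)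
      rw [hvi] at h
      simp only [PiLp.smul_apply, smul_eq_mul]
      linarith
    · right
      refine ⟨heq, fun i hi => ?_⟩
      have h := coord_zero hx hv hvx i (by rw [Finset.insert_eq_of_mem hi, heq])
      rw [hvi, mvec_apply_supp, mvec_apply_supp] at h
      linarith
  · rintro (⟨_, h⟩ | ⟨hcard, h⟩)
    · refine ⟨0, ?_, ?_⟩
      · rw [mem_fsub_ind hx]
        intro ε hε
        refine Eventually.of_forall fun z _ => ?_
        rw [inner_zero_left]
        positivity
      · rw [h, smul_smul]
        simp
    · refine ⟨(2 * c) • mvec A xs - (2 : ℝ) • mvec B xs, ?_, by abel⟩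
      apply mem_of_coord hx hcard
      intro i hi
      have := h i hi
      rw [← mvec_apply_supp, ← mvec_apply_supp] at this
      simp only [PiLp.sub_apply, PiLp.smul_apply, smul_eq_mul]
      rw [this]
      ring
end
end

section
/- For x ∈ ℝⁿ let proj_C(x) denote the set of minimizers of z ↦ ‖z − x‖₂ over C, and let T_r(x) be the set of all y ∈ ℝⁿ for which there exists Λ ⊆ {1,…,n} with |Λ| = r such that min_{i∈Λ}|x_i| ≥ max_{i∉Λ}|x_i|, y_i = x_i for i ∈ Λ, and y_i = 0 for i ∉ Λ. Then for every x ≠ 0, every element of T_r(x) is nonzero and proj_C(x) = {y/‖y‖₂ : y ∈ T_r(x)}; and proj_C(0) = C. -/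
open Filter Topology
open scoped RealInnerProductSpace

noncomputable section

/-- The metric projection onto C (as a set of minimizers). -/
def projC {n : ℕ} (r : ℕ) (x : EuclideanSpace ℝ (Fin n)) :
    Set (EuclideanSpace ℝ (Fin n)) :=
  {z | z ∈ sphC n r ∧ ∀ w ∈ sphC n r, ‖z - x‖ ≤ ‖w - x‖}

/-- The hard-thresholding operator keeping the r largest entries in absolute value. -/
def Tr {n : ℕ} (r : ℕ) (x : EuclideanSpace ℝ (Fin n)) :
    Set (EuclideanSpace ℝ (Fin n)) :=
  {y | ∃ Λ : Finset (Fin n), Λ.card = r ∧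
    (∀ i ∈ Λ, ∀ j, j ∉ Λ → |x j| ≤ |x i|) ∧
    (∀ i ∈ Λ, y i = x i) ∧ ∀ i, i ∉ Λ → y i = 0}

/-- Restriction of `x` to the index set `L`. -/
def restr {n : ℕ} (L : Finset (Fin n)) (x : EuclideanSpace ℝ (Fin n)) :
    EuclideanSpace ℝ (Fin n) := WithLp.toLp 2 (fun i => if i ∈ L then x i else 0)

lemma restr_apply {n : ℕ} (L : Finset (Fin n)) (x : EuclideanSpace ℝ (Fin n)) (i : Fin n) :
    restr L x i = if i ∈ L then x i else 0 := rfl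

lemma restr_norm_sq {n : ℕ} (L : Finset (Fin n)) (x : EuclideanSpace ℝ (Fin n)) :
    ‖restr L x‖ ^ 2 = ∑ i ∈ L, (x i) ^ 2 := by
  rw [EuclideanSpace.real_norm_sq_eq]
  simp [restr_apply, ite_pow]

lemma inner_restr {n : ℕ} (L : Finset (Fin n)) (x z : EuclideanSpace ℝ (Fin n))
    (hz : suppF z ⊆ L) : ⟪z, restr L x⟫ = ⟪z, x⟫ := by
  simp only [PiLp.inner_apply]
  refine Finset.sum_congr rfl fun i _ => ?_
  rw [restr_apply]
  split_ifs with h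
  · rfl
  · have : z i = 0 := by
      by_contra h0
      exact h (hz (by simp [suppF, h0]))
    simp [this]

lemma suppF_restr {n : ℕ} (L : Finset (Fin n)) (x : EuclideanSpace ℝ (Fin n)) (c : ℝ) :
    suppF (c • restr L x) ⊆ L := by
  intro i hi
  by_contra h
  simp [suppF, restr_apply, h] at hi

lemma sum_le_of_top {n : ℕ} (x : EuclideanSpace ℝ (Fin n)) (L S : Finset (Fin n))
    (hne : L.Nonempty) (hc : S.card ≤ L.card)
    (h : ∀ i ∈ L, ∀ j, j ∉ L → |x j| ≤ |x i|) :
    ∑ i ∈ S, (x i) ^ 2 ≤ ∑ i ∈ L, (x i) ^ 2 := by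
  classical
  obtain ⟨m, hm, hmin⟩ := L.exists_min_image (fun i => |x i|) hne
  have h1 : ∑ i ∈ S \ L, (x i) ^ 2 ≤ (S \ L).card • (x m) ^ 2 := by
    refine Finset.sum_le_card_nsmul _ _ _ fun i hi => ?_
    exact sq_le_sq.2 (h m hm i (Finset.mem_sdiff.1 hi).2)
  have h2 : (L \ S).card • (x m) ^ 2 ≤ ∑ i ∈ L \ S, (x i) ^ 2 := by
    refine Finset.card_nsmul_le_sum _ _ _ fun i hi => ?_
    exact sq_le_sq.2 (hmin i (Finset.mem_sdiff.1 hi).1)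
  have h3 : (S \ L).card ≤ (L \ S).card := by
    have a := Finset.card_sdiff_add_card_inter S L
    have b := Finset.card_sdiff_add_card_inter L S
    rw [Finset.inter_comm] at b
    omega
  have h4 : (S \ L).card • (x m) ^ 2 ≤ (L \ S).card • (x m) ^ 2 :=
    nsmul_le_nsmul_left (sq_nonneg _) h3
  have a := Finset.sum_inter_add_sum_sdiff S L (fun i => (x i) ^ 2)
  have b := Finset.sum_inter_add_sum_sdiff L S (fun i => (x i) ^ 2)
  rw [Finset.inter_comm] at b
  linarith

lemma top_of_max {n : ℕ} (x : EuclideanSpace ℝ (Fin n)) (L : Finset (Fin n))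
    (h : ∀ S : Finset (Fin n), S.card = L.card → ∑ i ∈ S, (x i) ^ 2 ≤ ∑ i ∈ L, (x i) ^ 2) :
    ∀ i ∈ L, ∀ j, j ∉ L → |x j| ≤ |x i| := by
  classical
  intro i hi j hj
  have hj' : j ∉ L.erase i := fun h => hj (Finset.mem_of_mem_erase h)
  have := h (insert j (L.erase i)) (by
    rw [Finset.card_insert_of_notMem hj', Finset.card_erase_add_one hi])
  rw [Finset.sum_insert hj', ← Finset.add_sum_erase L _ hi] at this
  exact sq_le_sq.1 (by linarith)

lemma mem_Tr_iff {n : ℕ} (r : ℕ) (x y : EuclideanSpace ℝ (Fin n)) :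
    y ∈ Tr r x ↔ ∃ L : Finset (Fin n), L.card = r ∧
      (∀ i ∈ L, ∀ j, j ∉ L → |x j| ≤ |x i|) ∧ y = restr L x := by
  constructor
  · rintro ⟨L, h1, h2, h3, h4⟩
    refine ⟨L, h1, h2, ?_⟩
    ext i
    rw [restr_apply]
    split_ifs with h
    · exact h3 i h
    · exact h4 i h
  · rintro ⟨L, h1, h2, rfl⟩
    exact ⟨L, h1, h2, fun i hi => by simp [restr_apply, hi], fun i hi => by simp [restr_apply, hi]⟩

lemma exists_top {n : ℕ} (r : ℕ) (hrn : r ≤ n) (x : EuclideanSpace ℝ (Fin n)) :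
    ∃ L : Finset (Fin n), L.card = r ∧ ∀ i ∈ L, ∀ j, j ∉ L → |x j| ≤ |x i| := by
  obtain ⟨L, hL, hmax⟩ := (Finset.powersetCard r (Finset.univ : Finset (Fin n))).exists_max_image
    (fun S => ∑ i ∈ S, (x i) ^ 2) (Finset.powersetCard_nonempty.2 (by simpa using hrn))
  have hc := (Finset.mem_powersetCard.1 hL).2
  refine ⟨L, hc, top_of_max x L fun S hS => hmax S ?_⟩
  simp [Finset.mem_powersetCard, hS, hc]

lemma norm_le_iff_inner {n : ℕ} (x z w : EuclideanSpace ℝ (Fin n)) (hz : ‖z‖ = 1)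
    (hw : ‖w‖ = 1) : ‖z - x‖ ≤ ‖w - x‖ ↔ ⟪w, x⟫ ≤ ⟪z, x⟫ := by
  rw [← sq_le_sq₀ (norm_nonneg _) (norm_nonneg _), norm_sub_sq_real, norm_sub_sq_real, hz, hw]
  constructor <;> intro h <;> linarith

lemma restr_ne_zero {n : ℕ} (x : EuclideanSpace ℝ (Fin n)) (hx : x ≠ 0) (L : Finset (Fin n))
    (hne : L.Nonempty) (h : ∀ i ∈ L, ∀ j, j ∉ L → |x j| ≤ |x i|) : restr L x ≠ 0 := by
  intro h0
  have hL : ∀ i ∈ L, x i = 0 := fun i hi => by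
    have : restr L x i = 0 := by rw [h0]; rfl
    simpa [restr_apply, hi] using this
  apply hx
  ext j
  by_cases hj : j ∈ L
  · exact hL j hj
  · obtain ⟨i, hi⟩ := hne
    have := h i hi j hj
    rw [hL i hi] at this
    simpa using this

lemma inner_le_restr {n : ℕ} (x z : EuclideanSpace ℝ (Fin n)) (L : Finset (Fin n))
    (hz : suppF z ⊆ L) (h1 : ‖z‖ = 1) : ⟪z, x⟫ ≤ ‖restr L x‖ := by
  rw [← inner_restr L x z hz]
  simpa [h1] using real_inner_le_norm z (restr L x)

lemma inner_normalized {n : ℕ} (x : EuclideanSpace ℝ (Fin n)) (L : Finset (Fin n))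
    (h : restr L x ≠ 0) : ⟪‖restr L x‖⁻¹ • restr L x, x⟫ = ‖restr L x‖ := by
  rw [← inner_restr L x _ (suppF_restr L x _), real_inner_smul_left, real_inner_self_eq_norm_sq]
  have := norm_ne_zero_iff.2 h
  field_simp

lemma normalized_mem {n : ℕ} (r : ℕ) (x : EuclideanSpace ℝ (Fin n)) (L : Finset (Fin n))
    (hc : L.card = r) (h : restr L x ≠ 0) : ‖restr L x‖⁻¹ • restr L x ∈ sphC n r :=
  ⟨hc ▸ Finset.card_le_card (suppF_restr L x _), norm_smul_inv_norm (𝕜 := ℝ) h⟩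

/-- Proposition 6.3: closed form of the projection onto the sparse unit sphere C. -/
theorem projection_onto_sparse_sphere
    {n : ℕ} (r : ℕ) (hr1 : 1 ≤ r) (hrn : r ≤ n) :
    (∀ x : EuclideanSpace ℝ (Fin n), x ≠ 0 →
      (∀ y ∈ Tr r x, y ≠ 0) ∧ projC r x = (fun y => ‖y‖⁻¹ • y) '' Tr r x) ∧
    projC r (0 : EuclideanSpace ℝ (Fin n)) = sphC n r := by
  refine ⟨fun x hx => ⟨?_, ?_⟩, ?_⟩
  · intro y hy
    obtain ⟨L, hc, htop, rfl⟩ := (mem_Tr_iff r x y).1 hy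
    exact restr_ne_zero x hx L (Finset.card_pos.1 (by omega)) htop
  · ext z
    constructor
    · rintro ⟨⟨hzc, hz1⟩, hmin⟩
      obtain ⟨L0, hc0, htop0⟩ := exists_top r hrn x
      have hne0 : L0.Nonempty := Finset.card_pos.1 (by omega)
      have hy0 := restr_ne_zero x hx L0 hne0 htop0
      have hw := normalized_mem r x L0 hc0 hy0
      have h1 := (norm_le_iff_inner x z _ hz1 hw.2).1 (hmin _ hw)
      rw [inner_normalized x L0 hy0] at h1
      obtain ⟨L, hSL, hLc⟩ := Finset.exists_superset_card_eq hzc (by simpa using hrn)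
      have h2 := inner_le_restr x z L hSL hz1
      have h3 : ‖restr L0 x‖ ^ 2 ≤ ‖restr L x‖ ^ 2 :=
        pow_le_pow_left₀ (norm_nonneg _) (h1.trans h2) 2
      rw [restr_norm_sq, restr_norm_sq] at h3
      have h4 : ‖restr L x‖ ≤ ‖restr L0 x‖ := by
        rw [← sq_le_sq₀ (norm_nonneg _) (norm_nonneg _), restr_norm_sq, restr_norm_sq]
        exact sum_le_of_top x L0 L hne0 (by omega) htop0
      have htop : ∀ i ∈ L, ∀ j, j ∉ L → |x j| ≤ |x i| :=
        top_of_max x L fun S hS =>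
          (sum_le_of_top x L0 S hne0 (by omega) htop0).trans h3
      have hy := restr_ne_zero x hx L (Finset.card_pos.1 (by omega)) htop
      refine ⟨restr L x, (mem_Tr_iff r x _).2 ⟨L, hLc, htop, rfl⟩, ?_⟩
      have h5 : ⟪z, restr L x⟫ = ‖z‖ * ‖restr L x‖ := by
        rw [inner_restr L x z hSL, hz1, one_mul]
        exact le_antisymm h2 (h4.trans h1)
      have h6 := inner_eq_norm_mul_iff_real.1 h5
      rw [hz1, one_smul] at h6
      have hn := norm_ne_zero_iff.2 hy
      show ‖restr L x‖⁻¹ • restr L x = z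
      rw [inv_smul_eq_iff₀ hn]
      exact h6.symm
    · rintro ⟨y, hy, rfl⟩
      obtain ⟨L, hc, htop, rfl⟩ := (mem_Tr_iff r x y).1 hy
      have hne : L.Nonempty := Finset.card_pos.1 (by omega)
      have h0 := restr_ne_zero x hx L hne htop
      have hm := normalized_mem r x L hc h0
      refine ⟨hm, fun w hw => ?_⟩
      refine (norm_le_iff_inner x _ w hm.2 hw.2).2 ?_
      rw [inner_normalized x L h0]
      refine (inner_le_restr x w _ subset_rfl hw.2).trans ?_
      rw [← sq_le_sq₀ (norm_nonneg _) (norm_nonneg _), restr_norm_sq, restr_norm_sq]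
      exact sum_le_of_top x L _ hne (hc ▸ hw.1) htop
  · ext z
    refine ⟨fun h => h.1, fun h => ⟨h, fun w hw => ?_⟩⟩
    rw [sub_zero, sub_zero, h.2, hw.2]
end
end

section
/- Let m ≥ 1, let λ₁,…,λ_m ≥ 0 be real numbers, let Σ := diag(λ₁,…,λ_m), and fix j ∈ {1,…,m} such that λ_i ≠ λ_j for at least one i. Set d₁ := (1/2)·min{|λ_i − λ_j| : 1 ≤ i ≤ m, λ_i ≠ λ_j}. Then for every z ∈ ℝᵐ with ‖z‖₂ = 1 and 0 < zᵀ(λ_j·I − Σ)z < d₁, one has zᵀΣ²z − (zᵀΣz)² ≥ d₁·zᵀ(λ_j·I − Σ)z. -/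
open Filter Topology

noncomputable section

/-- Equation (5.12): the key quadratic inequality used to establish the KL exponent 1/2
for the generalized Rayleigh quotient. -/
theorem key_quadratic_inequality_for_KL
    {m : ℕ} (hm : 1 ≤ m)
    (lam : Fin m → ℝ) (hlam : ∀ i, 0 ≤ lam i)
    (j : Fin m) (hne : ∃ i, lam i ≠ lam j)
    (d₁ : ℝ)
    (hd₁ : d₁ = (1 / 2) * sInf {t : ℝ | ∃ i, lam i ≠ lam j ∧ t = |lam i - lam j|})
    (z : EuclideanSpace ℝ (Fin m)) (hz : ‖z‖ = 1)
    (hpos : 0 < ∑ i, (lam j - lam i) * z i ^ 2)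
    (hlt : ∑ i, (lam j - lam i) * z i ^ 2 < d₁) :
    d₁ * ∑ i, (lam j - lam i) * z i ^ 2 ≤
      (∑ i, lam i ^ 2 * z i ^ 2) - (∑ i, lam i * z i ^ 2) ^ 2 := by
  have hz2 : ∑ i, z i ^ 2 = 1 := by
    have h := EuclideanSpace.real_norm_sq_eq z
    rw [hz] at h
    linarith
  have hkey : ∀ i, 2 * d₁ * ((lam j - lam i) * z i ^ 2) ≤ (lam j - lam i) ^ 2 * z i ^ 2 := by
    intro i
    have h1 : 2 * d₁ * (lam j - lam i) ≤ (lam j - lam i) ^ 2 := by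
      by_cases h : lam i = lam j
      · simp [h]
      · have h2 : 2 * d₁ ≤ |lam i - lam j| := by
          have h3 : sInf {t : ℝ | ∃ i, lam i ≠ lam j ∧ t = |lam i - lam j|} ≤ |lam i - lam j| := by
            apply csInf_le
            · refine ⟨0, ?_⟩
              rintro t ⟨k, _, rfl⟩
              exact abs_nonneg _
            · exact ⟨i, h, rfl⟩
          linarith
        rcases le_total (lam i) (lam j) with h4 | h4
        · rw [abs_of_nonpos (by linarith)] at h2
          nlinarith
        · nlinarith
    nlinarith [mul_le_mul_of_nonneg_right h1 (sq_nonneg (z i))]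
  have hsum := Finset.sum_le_sum (fun i (_ : i ∈ Finset.univ) => hkey i)
  rw [← Finset.mul_sum] at hsum
  have e1 : ∑ i, (lam j - lam i) * z i ^ 2 = lam j - ∑ i, lam i * z i ^ 2 := by
    simp only [sub_mul, Finset.sum_sub_distrib, ← Finset.mul_sum, hz2, mul_one]
  have e2 : ∑ i, (lam j - lam i) ^ 2 * z i ^ 2
      = lam j ^ 2 - 2 * lam j * ∑ i, lam i * z i ^ 2 + ∑ i, lam i ^ 2 * z i ^ 2 := by
    calc _ = ∑ i, (lam j ^ 2 * z i ^ 2 - 2 * lam j * (lam i * z i ^ 2) + lam i ^ 2 * z i ^ 2) :=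
          Finset.sum_congr rfl (fun i _ => by ring)
      _ = _ := by
          rw [Finset.sum_add_distrib, Finset.sum_sub_distrib, ← Finset.mul_sum, ← Finset.mul_sum,
            hz2, mul_one]
  rw [e2] at hsum
  rw [e1] at hsum hpos hlt ⊢
  nlinarith [mul_pos hpos (sub_pos.2 hlt)]
end
end

section
/- Let A and B be n×n real symmetric positive semidefinite matrices and r an integer with 1 ≤ r ≤ n such that every r×r principal submatrix of B is positive definite, and set L := ‖B‖₂ (the operator 2-norm, which is positive). Let x⁰ ∈ dom(G), let 0 < α̲ ≤ ᾱ < 1/L, and let (x^k) be a sequence such that for every k ∈ ℕ there exists α_k ∈ [α̲, ᾱ] with x^{k+1} a minimizer over C of z ↦ ‖z − (x^k − α_k·Bx^k + α_k·G(x^k)·Ax^k)‖₂. Then there exist x⋆ ∈ dom(G), ρ > 0 and τ ∈ (0,1) such that ‖x^k − x⋆‖₂ ≤ ρ·τ^k for all k ∈ ℕ (R-linear convergence), and x⋆ is a critical point of G: with Λ := supp(x⋆), either |Λ| < r and Bx⋆ = G(x⋆)·Ax⋆, or |Λ| = r and B_Λ·x⋆_Λ = G(x⋆)·A_Λ·x⋆_Λ.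 -/
open Filter Topology
open scoped RealInnerProductSpace

noncomputable section

/-! ### Coordinate truncation -/

/-- Truncation of a vector to the coordinates in `S`. -/
def projS {n : ℕ} (S : Finset (Fin n)) :
    EuclideanSpace ℝ (Fin n) →ₗ[ℝ] EuclideanSpace ℝ (Fin n) where
  toFun x := WithLp.toLp 2 (fun i => if i ∈ S then x i else 0)
  map_add' x y := by
    ext i
    by_cases h : i ∈ S <;> simp [h]
  map_smul' c x := by
    ext i
    by_cases h : i ∈ S <;> simp [h]

theorem projS_apply {n : ℕ} (S : Finset (Fin n)) (x : EuclideanSpace ℝ (Fin n)) (i : Fin n) :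
    projS S x i = if i ∈ S then x i else 0 := rfl

theorem projS_symm {n : ℕ} (S : Finset (Fin n)) (x y : EuclideanSpace ℝ (Fin n)) :
    ⟪projS S x, y⟫ = ⟪x, projS S y⟫ := by
  simp only [PiLp.inner_apply, projS_apply]
  refine Finset.sum_congr rfl fun i _ => ?_
  by_cases h : i ∈ S <;> simp [h]

theorem projS_idem {n : ℕ} (S : Finset (Fin n)) (x : EuclideanSpace ℝ (Fin n)) :
    projS S (projS S x) = projS S x := by
  ext i
  by_cases h : i ∈ S <;> simp [projS_apply, h]

theorem norm_projS_le {n : ℕ} (S : Finset (Fin n)) (x : EuclideanSpace ℝ (Fin n)) :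
    ‖projS S x‖ ≤ ‖x‖ := by
  have h1 : ‖projS S x‖ ^ 2 = ⟪x, projS S x⟫ := by
    rw [← real_inner_self_eq_norm_sq, projS_symm, projS_idem]
  have h2 := real_inner_le_norm x (projS S x)
  by_contra hlt
  push Not at hlt
  have := norm_nonneg x
  nlinarith

theorem projS_of_supp {n : ℕ} (S : Finset (Fin n)) (y : EuclideanSpace ℝ (Fin n))
    (h : suppF y ⊆ S) : projS S y = y := by
  ext i
  rw [projS_apply]
  split_ifs with hi
  · rfl
  · by_contra hne
    exact hi (h (by simp [suppF]; exact fun h0 => hne h0.symm))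

theorem suppF_projS {n : ℕ} (S : Finset (Fin n)) (x : EuclideanSpace ℝ (Fin n)) (c : ℝ) :
    suppF (c • projS S x) ⊆ S := by
  intro i hi
  by_contra h
  simp [suppF, projS_apply, h] at hi

theorem exists_card_eq {n r : ℕ} (hrn : r ≤ n) (s : Finset (Fin n)) (hs : s.card ≤ r) :
    ∃ S : Finset (Fin n), s ⊆ S ∧ S.card = r := by
  obtain ⟨u, h1, _, h3⟩ := Finset.exists_subsuperset_card_eq (Finset.subset_univ s) hs
    (by simpa using hrn)
  exact ⟨u, h1, h3⟩

/-! ### The sparse sphere is compact -/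

theorem isClosed_sphC (n r : ℕ) : IsClosed (sphC n r) := by
  have h : sphC n r = (⋃ S ∈ {S : Finset (Fin n) | S.card ≤ r},
      {x : EuclideanSpace ℝ (Fin n) | ∀ i, i ∉ S → x i = 0}) ∩ {x | ‖x‖ = 1} := by
    ext x
    simp only [sphC, Set.mem_ofPred_eq, Set.mem_inter_iff, Set.mem_iUnion, exists_prop]
    refine and_congr_left fun _ => ⟨fun h => ⟨suppF x, h, fun i hi => ?_⟩, ?_⟩
    · by_contra h0
      exact hi (by simp [suppF, h0])
    · rintro ⟨S, hS, hx⟩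
      refine (Finset.card_le_card fun i hi => ?_).trans hS
      by_contra h0
      simp [suppF, hx i h0] at hi
  rw [h]
  refine IsClosed.inter ?_ (isClosed_eq continuous_norm continuous_const)
  refine Set.Finite.isClosed_biUnion (Set.toFinite _) fun S _ => ?_
  simp only [Set.ofPred_forall]
  refine isClosed_iInter fun i => isClosed_iInter fun _ => ?_
  exact isClosed_eq (by fun_prop) continuous_const

theorem isCompact_sphC (n r : ℕ) : IsCompact (sphC n r) := by
  refine Metric.isCompact_of_isClosed_isBounded (isClosed_sphC n r) ?_
  refine (Metric.isBounded_closedBall (x := (0 : EuclideanSpace ℝ (Fin n))) (r := 1)).subset ?_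
  intro x hx
  simp [hx.2]

/-! ### The quadratic error bound for a symmetric operator -/

theorem quad_error_bound {n : ℕ}
    (M : EuclideanSpace ℝ (Fin n) →ₗ[ℝ] EuclideanSpace ℝ (Fin n))
    (hM : ∀ x y, ⟪M x, y⟫ = ⟪x, M y⟫) :
    ∃ K : ℝ, 0 ≤ K ∧ ∀ y, ⟪y, M y⟫ ≤ K * ‖M y‖ ^ 2 := by
  obtain ⟨g, hg⟩ := M.rangeRestrict.exists_rightInverse_of_surjective M.range_rangeRestrict
  obtain ⟨N, hN⟩ := LinearMap.exists_extend g
  have hMN : ∀ y, M (N (M y)) = M y := by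
    intro y
    have h1 : N (M y) = g (M.rangeRestrict y) := by
      rw [← hN]; rfl
    rw [h1]
    have h2 := congrArg (fun f => ((f (M.rangeRestrict y) : LinearMap.range M) :
      EuclideanSpace ℝ (Fin n))) hg
    simpa using h2
  refine ⟨‖N.toContinuousLinearMap‖, norm_nonneg _, fun y => ?_⟩
  have h3 : ‖N (M y)‖ ≤ ‖N.toContinuousLinearMap‖ * ‖M y‖ :=
    N.toContinuousLinearMap.le_opNorm (M y)
  calc ⟪y, M y⟫ = ⟪M y, N (M y)⟫ := by rw [hM, hMN]
    _ ≤ ‖M y‖ * ‖N (M y)‖ := real_inner_le_norm _ _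
    _ ≤ ‖M y‖ * (‖N.toContinuousLinearMap‖ * ‖M y‖) := by gcongr
    _ = _ := by ring

/-! ### A scalar recursion -/

theorem scalar_linear_rate (e : ℕ → ℝ) (K1 K2 : ℝ) (hK1 : 0 ≤ K1)
    (h0 : ∀ k, 0 ≤ e k) (hanti : Antitone e) (hlim : Tendsto e atTop (𝓝 0))
    (hrec : ∀ k, e (k + 1) ≤ K1 * (e k - e (k + 1)) + K2 * e k ^ 2) :
    ∃ C > (0 : ℝ), ∃ q ∈ Set.Ioo (0 : ℝ) 1, ∀ k, e k ≤ C * q ^ k := by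
  have hl : Tendsto (fun k => K2 * e k) atTop (𝓝 0) := by simpa using hlim.const_mul K2
  obtain ⟨N, hN⟩ := eventually_atTop.1 (hl.eventually (gt_mem_nhds (show (0 : ℝ) < 1 / 2 by norm_num)))
  set q : ℝ := (K1 + 1 / 2) / (K1 + 1) with hq
  have hq0 : 0 < q := by positivity
  have hq1 : q < 1 := by rw [hq, div_lt_one (by positivity)]; linarith
  have hstep : ∀ k, N ≤ k → e (k + 1) ≤ q * e k := by
    intro k hk
    rw [hq, div_mul_eq_mul_div, le_div_iff₀ (by positivity)]
    nlinarith [hrec k, hN k hk, h0 k]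
  have hgeo : ∀ j, e (N + j) ≤ e 0 * q ^ j := by
    intro j
    induction j with
    | zero => simpa using hanti (Nat.zero_le N)
    | succ j ih =>
      calc e (N + (j + 1)) ≤ q * e (N + j) := hstep (N + j) (by omega)
        _ ≤ q * (e 0 * q ^ j) := by gcongr
        _ = _ := by ring
  have he0 := h0 0
  refine ⟨(e 0 + 1) / q ^ N, by positivity, q, ⟨hq0, hq1⟩, fun k => ?_⟩
  rcases le_total N k with h | h
  · obtain ⟨j, rfl⟩ := Nat.exists_eq_add_of_le h
    have : (e 0 + 1) / q ^ N * q ^ (N + j) = (e 0 + 1) * q ^ j := by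
      rw [pow_add]; field_simp
    rw [this]
    refine (hgeo j).trans ?_
    gcongr
    linarith
  · have h1 : q ^ N ≤ q ^ k := pow_le_pow_of_le_one hq0.le hq1.le h
    have h2 : e k ≤ e 0 := hanti (Nat.zero_le k)
    have h3 : (e 0 + 1) / q ^ N * q ^ N = e 0 + 1 := by field_simp
    have h4 : (e 0 + 1) / q ^ N * q ^ N ≤ (e 0 + 1) / q ^ N * q ^ k := by gcongr
    linarith

/-! ### One step of the algorithm -/

theorem step_inner_le {n r : ℕ} (y u : EuclideanSpace ℝ (Fin n)) (hy : y ∈ sphC n r)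
    (hmin : ∀ z ∈ sphC n r, ‖y - u‖ ≤ ‖z - u‖) :
    ∀ z ∈ sphC n r, ⟪u, z⟫ ≤ ⟪u, y⟫ := by
  intro z hz
  have h1 : ‖y - u‖ ^ 2 ≤ ‖z - u‖ ^ 2 := by gcongr; exact hmin z hz
  rw [norm_sub_sq_real, norm_sub_sq_real, hy.2, hz.2, real_inner_comm, real_inner_comm u z] at h1
  linarith

theorem step_residual {n r : ℕ} (x y w : EuclideanSpace ℝ (Fin n)) (α : ℝ) (hα : 0 ≤ α)
    (hx : ‖x‖ = 1) (hy : y ∈ sphC n r) (hw : ⟪w, x⟫ = 0)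
    (hmax : ∀ z ∈ sphC n r, ⟪x - α • w, z⟫ ≤ ⟪x - α • w, y⟫)
    (S : Finset (Fin n)) (hS : S.card = r) (hyS : suppF y ⊆ S) :
    α * ‖projS S w‖ ≤ (2 + α * ‖w‖) * ‖y - x‖ := by
  set u := x - α • w with hu
  set t := ⟪u, y⟫ with ht
  have hPy : projS S y = y := projS_of_supp S y hyS
  have htP : t = ⟪projS S u, y⟫ := by rw [projS_symm, hPy]
  have hge : ‖projS S u‖ ≤ t := by
    by_cases h0 : projS S u = 0
    · rw [htP, h0]; simp
    · have hne : ‖projS S u‖ ≠ 0 := norm_ne_zero_iff.2 h0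
      have hz : (‖projS S u‖⁻¹ • projS S u) ∈ sphC n r := by
        refine ⟨(Finset.card_le_card (suppF_projS S u _)).trans hS.le, ?_⟩
        rw [norm_smul, norm_inv, norm_norm, inv_mul_cancel₀ hne]
      have h1 := hmax _ hz
      rw [inner_smul_right, ← projS_idem, ← projS_symm, real_inner_self_eq_norm_sq,
        projS_idem] at h1
      have h2 : ‖projS S u‖⁻¹ * ‖projS S u‖ ^ 2 = ‖projS S u‖ := by field_simp
      linarith
  have heq : projS S u = t • y := by
    have h1 : ‖projS S u - t • y‖ ^ 2 ≤ 0 := by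
      rw [norm_sub_sq_real, inner_smul_right, ← htP, norm_smul, hy.2, mul_one, Real.norm_eq_abs,
        sq_abs]
      nlinarith [norm_nonneg (projS S u)]
    have h2 : ‖projS S u - t • y‖ = 0 := by
      have := norm_nonneg (projS S u - t • y)
      nlinarith
    exact sub_eq_zero.1 (norm_eq_zero.1 h2)
  have hux : ⟪u, x⟫ = 1 := by
    rw [hu, inner_sub_left, inner_smul_left, hw, real_inner_self_eq_norm_sq, hx]; simp
  have ht1 : |t - 1| ≤ (1 + α * ‖w‖) * ‖y - x‖ := by
    have h1 : t - 1 = ⟪u, y - x⟫ := by rw [inner_sub_right, hux]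
    rw [h1]
    refine (abs_real_inner_le_norm _ _).trans ?_
    gcongr
    refine (norm_sub_le _ _).trans ?_
    rw [hx, norm_smul, Real.norm_eq_abs, abs_of_nonneg hα]
  have hfin : α • projS S w = projS S (x - y) - (t - 1) • y := by
    have h1 : projS S u = projS S x - α • projS S w := by
      rw [hu, map_sub, map_smul]
    rw [map_sub, hPy, sub_smul, ← heq, h1, one_smul]
    abel
  have h5 : α * ‖projS S w‖ = ‖α • projS S w‖ := by
    rw [norm_smul, Real.norm_eq_abs, abs_of_nonneg hα]
  rw [h5, hfin]
  refine (norm_sub_le _ _).trans ?_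
  have h6 : ‖projS S (x - y)‖ ≤ ‖y - x‖ := by
    rw [norm_sub_rev y x]; exact norm_projS_le _ _
  rw [norm_smul, hy.2, mul_one, Real.norm_eq_abs]
  linarith

theorem step_descent {n r : ℕ}
    (a b : EuclideanSpace ℝ (Fin n) →L[ℝ] EuclideanSpace ℝ (Fin n))
    (ha : ∀ x y, ⟪a x, y⟫ = ⟪x, a y⟫) (hb : ∀ x y, ⟪b x, y⟫ = ⟪x, b y⟫)
    (ha0 : ∀ x, 0 ≤ ⟪x, a x⟫)
    (x y : EuclideanSpace ℝ (Fin n)) (hx : x ∈ sphC n r) (hy : y ∈ sphC n r)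
    (c α : ℝ) (hc : 0 ≤ c) (hα : 0 < α) (hcx : ⟪x, b x⟫ = c * ⟪x, a x⟫)
    (hmax : ⟪x - α • (b x - c • a x), x⟫ ≤ ⟪x - α • (b x - c • a x), y⟫) :
    ⟪y, b y⟫ + (1 / α - ‖b‖) * ‖y - x‖ ^ 2 ≤ c * ⟪y, a y⟫ := by
  set d := y - x with hd
  have hyd : y = x + d := by rw [hd]; abel
  have h1 : 0 ≤ ⟪x - α • (b x - c • a x), d⟫ := by rw [hd, inner_sub_right]; linarith
  have h2 : ⟪x, d⟫ = -‖d‖ ^ 2 / 2 := by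
    have h3 : ‖y‖ ^ 2 = ‖x‖ ^ 2 + 2 * ⟪x, d⟫ + ‖d‖ ^ 2 := by rw [hyd, norm_add_sq_real]
    rw [hx.2, hy.2] at h3
    linarith
  have h4 : α * (⟪b x, d⟫ - c * ⟪a x, d⟫) ≤ -‖d‖ ^ 2 / 2 := by
    rw [inner_sub_left, real_inner_smul_left, inner_sub_left, real_inner_smul_left, h2] at h1
    linarith
  have h5 : ⟪b x, d⟫ - c * ⟪a x, d⟫ ≤ 1 / α * (-‖d‖ ^ 2 / 2) := by
    rw [one_div, inv_mul_eq_div, le_div_iff₀ hα]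
    linarith
  have h6 : ∀ T : EuclideanSpace ℝ (Fin n) →L[ℝ] EuclideanSpace ℝ (Fin n),
      (∀ x y, ⟪T x, y⟫ = ⟪x, T y⟫) → ⟪y, T y⟫ = ⟪x, T x⟫ + 2 * ⟪T x, d⟫ + ⟪d, T d⟫ := by
    intro T hT
    rw [hyd, map_add, inner_add_left, inner_add_right, inner_add_right, ← hT x d,
      real_inner_comm (T x) d]
    ring
  have h7 : ⟪d, b d⟫ ≤ ‖b‖ * ‖d‖ ^ 2 := by
    refine (real_inner_le_norm _ _).trans ?_
    have := mul_le_mul_of_nonneg_left (b.le_opNorm d) (norm_nonneg d)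
    nlinarith
  rw [h6 a ha, h6 b hb, hcx]
  have h8 := mul_nonneg hc (ha0 d)
  nlinarith

theorem main_abs {n r : ℕ} (hrn : r ≤ n)
    (a b : EuclideanSpace ℝ (Fin n) →L[ℝ] EuclideanSpace ℝ (Fin n))
    (ha : ∀ x y, ⟪a x, y⟫ = ⟪x, a y⟫) (hb : ∀ x y, ⟪b x, y⟫ = ⟪x, b y⟫)
    (ha0 : ∀ x, 0 ≤ ⟪x, a x⟫) (hbpos : ∀ x ∈ sphC n r, 0 < ⟪x, b x⟫)
    (x : ℕ → EuclideanSpace ℝ (Fin n)) (α : ℕ → ℝ) (αlo αhi : ℝ)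
    (hαlo : 0 < αlo) (hαhi : ‖b‖ < 1 / αhi) (hα : ∀ k, αlo ≤ α k ∧ α k ≤ αhi)
    (c : ℕ → ℝ) (hx0 : x 0 ∈ sphC n r ∧ ⟪x 0, a (x 0)⟫ ≠ 0)
    (hc : ∀ k, x k ∈ sphC n r → ⟪x k, a (x k)⟫ ≠ 0 → c k = ⟪x k, b (x k)⟫ / ⟪x k, a (x k)⟫)
    (hiter : ∀ k, x (k + 1) ∈ sphC n r ∧ ∀ z ∈ sphC n r,
      ‖x (k + 1) - (x k - α k • (b (x k) - c k • a (x k)))‖ ≤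
        ‖z - (x k - α k • (b (x k) - c k • a (x k)))‖) :
    ∃ xs : EuclideanSpace ℝ (Fin n), ∃ ρ > (0 : ℝ), ∃ τ ∈ Set.Ioo (0 : ℝ) 1,
      (∀ k, ‖x k - xs‖ ≤ ρ * τ ^ k) ∧ xs ∈ sphC n r ∧ ⟪xs, a xs⟫ ≠ 0 ∧
      ∀ S : Finset (Fin n), S.card = r → suppF xs ⊆ S →
        projS S (b xs - (⟪xs, b xs⟫ / ⟪xs, a xs⟫) • a xs) = 0 := by
  have hαhi0 : 0 < αhi := hαlo.trans_le ((hα 0).1.trans (hα 0).2)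
  have hαpos : ∀ k, 0 < α k := fun k => hαlo.trans_le (hα k).1
  set d := 1 / αhi - ‖b‖ with hd
  have hd0 : 0 < d := by linarith
  have hxC : ∀ k, x k ∈ sphC n r := by
    intro k
    cases k with
    | zero => exact hx0.1
    | succ k => exact (hiter k).1
  have hmax : ∀ k, ∀ z ∈ sphC n r, ⟪x k - α k • (b (x k) - c k • a (x k)), z⟫ ≤
      ⟪x k - α k • (b (x k) - c k • a (x k)), x (k + 1)⟫ :=
    fun k => step_inner_le _ _ (hiter k).1 (hiter k).2
  have hck : ∀ k, ⟪x k, a (x k)⟫ ≠ 0 → 0 < c k ∧ ⟪x k, b (x k)⟫ = c k * ⟪x k, a (x k)⟫ := by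
    intro k hk
    have hk' : 0 < ⟪x k, a (x k)⟫ := lt_of_le_of_ne (ha0 _) (Ne.symm hk)
    rw [hc k (hxC k) hk]
    exact ⟨div_pos (hbpos _ (hxC k)) hk', by field_simp⟩
  have hdesc0 : ∀ k, ⟪x k, a (x k)⟫ ≠ 0 →
      ⟪x (k + 1), b (x (k + 1))⟫ + d * ‖x (k + 1) - x k‖ ^ 2 ≤
        c k * ⟪x (k + 1), a (x (k + 1))⟫ := by
    intro k hk
    have h1 := step_descent a b ha hb ha0 (x k) (x (k + 1)) (hxC k) (hxC (k + 1)) (c k) (α k)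
      (hck k hk).1.le (hαpos k) (hck k hk).2 (hmax k _ (hxC k))
    have h2 : d ≤ 1 / α k - ‖b‖ := by
      have := one_div_le_one_div_of_le (hαpos k) (hα k).2
      linarith
    have h3 := mul_le_mul_of_nonneg_right h2 (sq_nonneg ‖x (k + 1) - x k‖)
    linarith
  have hA : ∀ k, ⟪x k, a (x k)⟫ ≠ 0 := by
    intro k
    induction k with
    | zero => exact hx0.2
    | succ k ih =>
      intro h0
      have h1 := hdesc0 k ih
      rw [h0, mul_zero] at h1
      have h2 := hbpos _ (hxC (k + 1))
      have h3 := mul_nonneg hd0.le (sq_nonneg ‖x (k + 1) - x k‖)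
      linarith
  have hApos : ∀ k, 0 < ⟪x k, a (x k)⟫ := fun k => lt_of_le_of_ne (ha0 _) (Ne.symm (hA k))
  have hcpos : ∀ k, 0 < c k := fun k => (hck k (hA k)).1
  have hceq : ∀ k, ⟪x k, b (x k)⟫ = c k * ⟪x k, a (x k)⟫ := fun k => (hck k (hA k)).2
  have hAle : ∀ k, ⟪x k, a (x k)⟫ ≤ ‖a‖ := by
    intro k
    refine (real_inner_le_norm _ _).trans ?_
    have := a.le_opNorm (x k)
    rw [(hxC k).2] at this ⊢
    linarith
  have hdesc1 : ∀ k, d * ‖x (k + 1) - x k‖ ^ 2 ≤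
      (c k - c (k + 1)) * ⟪x (k + 1), a (x (k + 1))⟫ := by
    intro k
    have := hdesc0 k (hA k)
    rw [hceq (k + 1)] at this
    linarith
  have hanti1 : ∀ k, c (k + 1) ≤ c k := by
    intro k
    have h1 := hdesc1 k
    have h3 := mul_nonneg hd0.le (sq_nonneg ‖x (k + 1) - x k‖)
    by_contra hlt
    push Not at hlt
    nlinarith [hApos (k + 1)]
  have hanti : Antitone c := antitone_nat_of_succ_le hanti1
  have hdesc : ∀ k, d * ‖x (k + 1) - x k‖ ^ 2 ≤ ‖a‖ * (c k - c (k + 1)) := by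
    intro k
    have h1 := mul_le_mul_of_nonneg_left (hAle (k + 1)) (sub_nonneg.2 (hanti1 k))
    linarith [hdesc1 k]
  -- the limit value
  have hbdd : BddBelow (Set.range c) := ⟨0, by rintro _ ⟨k, rfl⟩; exact (hcpos k).le⟩
  set cs := ⨅ k, c k with hcs
  have hclim : Tendsto c atTop (𝓝 cs) := tendsto_atTop_ciInf hanti hbdd
  have hcsle : ∀ k, cs ≤ c k := fun k => ciInf_le hbdd k
  have hcs0 : 0 ≤ cs := le_ciInf fun k => (hcpos k).le
  -- lower bound for the denominators
  obtain ⟨q0, hq0, hq⟩ : ∃ q0 > (0 : ℝ), ∀ k, q0 ≤ ⟪x k, a (x k)⟫ := by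
    obtain ⟨z, hz, hzmin⟩ := (isCompact_sphC n r).exists_isMinOn ⟨x 0, hx0.1⟩
      (f := fun z => ⟪z, b z⟫) (by fun_prop)
    refine ⟨⟪z, b z⟫ / c 0, div_pos (hbpos z hz) (hcpos 0), fun k => ?_⟩
    rw [div_le_iff₀ (hcpos 0)]
    have h1 : ⟪z, b z⟫ ≤ ⟪x k, b (x k)⟫ := hzmin (hxC k)
    have h2 := mul_le_mul_of_nonneg_right (hanti (Nat.zero_le k)) (hApos k).le
    rw [hceq k] at h1
    linarith
  -- the uniform quadratic error bound
  obtain ⟨K, hK0, hK⟩ : ∃ K : ℝ, 0 ≤ K ∧ ∀ (S : Finset (Fin n)) y, suppF y ⊆ S →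
      ⟪y, b y - cs • a y⟫ ≤ K * ‖projS S (b y - cs • a y)‖ ^ 2 := by
    have h1 : ∀ S : Finset (Fin n), ∃ K : ℝ, 0 ≤ K ∧ ∀ y, suppF y ⊆ S →
      ⟪y, b y - cs • a y⟫ ≤ K * ‖projS S (b y - cs • a y)‖ ^ 2 := by
      intro S
      obtain ⟨K, hK0, hK⟩ := quad_error_bound
        (projS S ∘ₗ ((b - cs • a : EuclideanSpace ℝ (Fin n) →L[ℝ] EuclideanSpace ℝ (Fin n)) :
          EuclideanSpace ℝ (Fin n) →ₗ[ℝ] EuclideanSpace ℝ (Fin n)) ∘ₗ projS S) (by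
          intro x y
          simp only [LinearMap.comp_apply, ContinuousLinearMap.coe_coe,
            _root_.sub_apply, _root_.smul_apply]
          rw [projS_symm, ← projS_symm S x, inner_sub_left, inner_sub_right, real_inner_smul_left,
            real_inner_smul_right, ha, hb])
      refine ⟨K, hK0, fun y hy => ?_⟩
      have h2 := hK y
      simp only [LinearMap.comp_apply, ContinuousLinearMap.coe_coe,
            _root_.sub_apply, _root_.smul_apply] at h2
      rw [← projS_symm, projS_of_supp S y hy] at h2
      exact h2
    choose K hK0 hK using h1
    refine ⟨∑ S, K S, Finset.sum_nonneg fun S _ => hK0 S, fun S y hy => (hK S y hy).trans ?_⟩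
    gcongr
    exact Finset.single_le_sum (f := K) (fun S _ => hK0 S) (Finset.mem_univ S)
  -- residual estimate
  set W := ‖b‖ + c 0 * ‖a‖ with hW
  set K4 := (2 + αhi * W) / αlo + (‖b‖ + cs * ‖a‖) with hK4
  have hW0 : 0 ≤ W := by have := (hcpos 0).le; positivity
  have hK40 : 0 ≤ K4 := by positivity
  have hwx : ∀ k, ⟪b (x k) - c k • a (x k), x k⟫ = 0 := by
    intro k
    rw [inner_sub_left, real_inner_smul_left, real_inner_comm, real_inner_comm (x k), hceq k]
    ring
  have hxn : ∀ k, ‖x k‖ = 1 := fun k => (hxC k).2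
  have hres : ∀ k (S : Finset (Fin n)), S.card = r → suppF (x (k + 1)) ⊆ S →
      ‖projS S (b (x (k + 1)) - cs • a (x (k + 1)))‖ ≤
        K4 * ‖x (k + 1) - x k‖ + ‖a‖ * (c k - cs) := by
    intro k S hS hsub
    have h1 := step_residual (x k) (x (k + 1)) (b (x k) - c k • a (x k)) (α k) (hαpos k).le
      (hxn k) (hxC (k + 1)) (hwx k) (hmax k) S hS hsub
    set w := b (x k) - c k • a (x k) with hw
    have h2 : ‖w‖ ≤ W := by
      refine (norm_sub_le _ _).trans ?_
      have h3 := b.le_opNorm (x k)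
      have h4 := a.le_opNorm (x k)
      rw [hxn k, mul_one] at h3 h4
      rw [norm_smul, Real.norm_eq_abs, abs_of_pos (hcpos k)]
      have h5 := mul_le_mul (hanti (Nat.zero_le k)) h4 (norm_nonneg _) (hcpos 0).le
      linarith
    have h3 : ‖projS S w‖ ≤ (2 + αhi * W) / αlo * ‖x (k + 1) - x k‖ := by
      rw [div_mul_eq_mul_div, le_div_iff₀ hαlo]
      have h4 : αlo * ‖projS S w‖ ≤ α k * ‖projS S w‖ := by gcongr; exact (hα k).1
      have h5 : (2 + α k * ‖w‖) * ‖x (k + 1) - x k‖ ≤ (2 + αhi * W) * ‖x (k + 1) - x k‖ := by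
        gcongr
        exact (hα k).2
      linarith
    have h6 : b (x (k + 1)) - cs • a (x (k + 1)) = w + (b (x (k + 1) - x k)
        - cs • a (x (k + 1) - x k) + (c k - cs) • a (x k)) := by
      rw [hw, map_sub, map_sub, smul_sub, sub_smul]
      abel
    rw [h6, map_add]
    refine (norm_add_le _ _).trans ?_
    have h7 : ‖b (x (k + 1) - x k) - cs • a (x (k + 1) - x k) + (c k - cs) • a (x k)‖ ≤
        (‖b‖ + cs * ‖a‖) * ‖x (k + 1) - x k‖ + ‖a‖ * (c k - cs) := by
      refine (norm_add_le _ _).trans ?_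
      refine add_le_add ((norm_sub_le _ _).trans ?_) ?_
      · have h8 := b.le_opNorm (x (k + 1) - x k)
        have h9 := mul_le_mul_of_nonneg_left (a.le_opNorm (x (k + 1) - x k)) hcs0
        rw [norm_smul, Real.norm_eq_abs, abs_of_nonneg hcs0]
        linarith
      · have h8 := a.le_opNorm (x k)
        rw [hxn k, mul_one] at h8
        have h9 : 0 ≤ c k - cs := sub_nonneg.2 (hcsle k)
        rw [norm_smul, Real.norm_eq_abs, abs_of_nonneg h9]
        nlinarith
    have h10 := norm_projS_le S (b (x (k + 1) - x k) - cs • a (x (k + 1) - x k)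
      + (c k - cs) • a (x k))
    rw [hK4]
    linarith
  -- the recursion
  have hrec : ∀ k, c (k + 1) - cs ≤
      (2 * K * K4 ^ 2 * ‖a‖ / (d * q0)) * ((c k - cs) - (c (k + 1) - cs)) +
        (2 * K * ‖a‖ ^ 2 / q0) * (c k - cs) ^ 2 := by
    intro k
    obtain ⟨S, hsub, hS⟩ := exists_card_eq hrn (suppF (x (k + 1))) (hxC (k + 1)).1
    have h1 := hK S (x (k + 1)) hsub
    have h2 := hres k S hS hsub
    rw [inner_sub_right, real_inner_smul_right, hceq (k + 1)] at h1
    set R := ‖projS S (b (x (k + 1)) - cs • a (x (k + 1)))‖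
    set D := ‖x (k + 1) - x k‖
    have h3 : R ^ 2 ≤ 2 * K4 ^ 2 * D ^ 2 + 2 * ‖a‖ ^ 2 * (c k - cs) ^ 2 := by
      have h4 : R ^ 2 ≤ (K4 * D + ‖a‖ * (c k - cs)) ^ 2 := by
        have : 0 ≤ R := norm_nonneg _
        gcongr
      nlinarith [sq_nonneg (K4 * D - ‖a‖ * (c k - cs))]
    have h5 : (c (k + 1) - cs) * q0 ≤ K * R ^ 2 := by
      have := mul_le_mul_of_nonneg_left (hq (k + 1)) (sub_nonneg.2 (hcsle (k + 1)))
      linarith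
    have h6 : D ^ 2 ≤ ‖a‖ * (c k - c (k + 1)) / d := by
      rw [le_div_iff₀ hd0]; linarith [hdesc k]
    have h7 : (c (k + 1) - cs) * q0 ≤ K * (2 * K4 ^ 2 * (‖a‖ * (c k - c (k + 1)) / d) +
        2 * ‖a‖ ^ 2 * (c k - cs) ^ 2) := by
      refine h5.trans ?_
      gcongr
      refine h3.trans ?_
      gcongr
    rw [← le_div_iff₀ hq0] at h7
    refine h7.trans (le_of_eq ?_)
    field_simp
    ring
  obtain ⟨C, hC, q, ⟨hq0', hq1'⟩, hCq⟩ := scalar_linear_rate (fun k => c k - cs) _ _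
    (by positivity) (fun k => sub_nonneg.2 (hcsle k))
    (fun i j hij => by simpa using hanti hij)
    (by simpa using hclim.sub_const cs) hrec
  -- geometric decay of the increments
  set τ := Real.sqrt q with hτ
  have hτ0 : 0 < τ := Real.sqrt_pos.2 hq0'
  have hτ1 : τ < 1 := by rw [hτ, Real.sqrt_lt' one_pos]; simpa using hq1'
  have hτq : τ ^ 2 = q := Real.sq_sqrt hq0'.le
  set C' := Real.sqrt (‖a‖ * C / d) with hC'
  have hC'0 : 0 ≤ C' := Real.sqrt_nonneg _
  have hincr : ∀ k, dist (x k) (x (k + 1)) ≤ C' * τ ^ k := by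
    intro k
    rw [dist_comm, dist_eq_norm]
    refine le_of_sq_le_sq ?_ (by positivity)
    rw [mul_pow, ← pow_mul, mul_comm k 2, pow_mul, hτq, hC', Real.sq_sqrt (by positivity),
      div_mul_eq_mul_div, le_div_iff₀ hd0]
    have h1 := hdesc k
    have h2 : c k - c (k + 1) ≤ C * q ^ k := by linarith [hCq k, hcsle (k + 1)]
    have h3 := mul_le_mul_of_nonneg_left h2 (norm_nonneg a)
    linarith
  obtain ⟨xs, hxs⟩ := cauchySeq_tendsto_of_complete (cauchySeq_of_le_geometric τ C' hτ1 hincr)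
  have hxsC : xs ∈ sphC n r := (isClosed_sphC n r).mem_of_tendsto hxs (Eventually.of_forall hxC)
  have hAlim : Tendsto (fun k => ⟪x k, a (x k)⟫) atTop (𝓝 ⟪xs, a xs⟫) :=
    ((by fun_prop : Continuous fun z => ⟪z, a z⟫).tendsto xs).comp hxs
  have hBlim : Tendsto (fun k => ⟪x k, b (x k)⟫) atTop (𝓝 ⟪xs, b xs⟫) :=
    ((by fun_prop : Continuous fun z => ⟪z, b z⟫).tendsto xs).comp hxs
  have hAs : 0 < ⟪xs, a xs⟫ := hq0.trans_le (ge_of_tendsto' hAlim hq)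
  have hcseq : ⟪xs, b xs⟫ = cs * ⟪xs, a xs⟫ := by
    refine tendsto_nhds_unique hBlim ?_
    simp only [hceq]
    exact hclim.mul hAlim
  refine ⟨xs, C' / (1 - τ) + 1, by have : 0 < 1 - τ := by linarith
                                   positivity, τ, ⟨hτ0, hτ1⟩, ?_, hxsC, hAs.ne', ?_⟩
  · intro k
    have h1 := dist_le_of_le_geometric_of_tendsto τ C' hτ1 hincr hxs k
    rw [dist_eq_norm] at h1
    have h2 : C' * τ ^ k / (1 - τ) = C' / (1 - τ) * τ ^ k := by ring
    have h3 : 0 < τ ^ k := by positivity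
    linarith
  · intro S hS hsub
    have hdiv : ⟪xs, b xs⟫ / ⟪xs, a xs⟫ = cs := by rw [hcseq]; field_simp
    rw [hdiv]
    obtain ⟨αs, hαs, φ, hφ, hαlim⟩ := (isCompact_Icc (a := αlo) (b := αhi)).tendsto_subseq
      (x := α) (fun k => ⟨(hα k).1, (hα k).2⟩)
    have hxφ := hxs.comp hφ.tendsto_atTop
    have hxφ1 : Tendsto (fun k => x (φ k + 1)) atTop (𝓝 xs) :=
      ((tendsto_add_atTop_iff_nat 1).2 hxs).comp hφ.tendsto_atTop
    have hcφ := hclim.comp hφ.tendsto_atTop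
    have hulim : Tendsto (fun k => x (φ k) - α (φ k) • (b (x (φ k)) - c (φ k) • a (x (φ k)))) atTop
        (𝓝 (xs - αs • (b xs - cs • a xs))) :=
      hxφ.sub (hαlim.smul (((b.continuous.tendsto xs).comp hxφ).sub
        (hcφ.smul ((a.continuous.tendsto xs).comp hxφ))))
    have hmaxs : ∀ z ∈ sphC n r, ⟪xs - αs • (b xs - cs • a xs), z⟫ ≤
        ⟪xs - αs • (b xs - cs • a xs), xs⟫ := by
      intro z hz
      exact le_of_tendsto_of_tendsto' (hulim.inner tendsto_const_nhds) (hulim.inner hxφ1)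
        (fun k => hmax (φ k) z hz)
    have hαs0 : 0 < αs := hαlo.trans_le hαs.1
    have hw0 : ⟪b xs - cs • a xs, xs⟫ = 0 := by
      rw [inner_sub_left, real_inner_smul_left, real_inner_comm, real_inner_comm xs, hcseq]
      ring
    have h1 := step_residual xs xs _ αs hαs0.le hxsC.2 hxsC hw0 hmaxs S hS hsub
    rw [sub_self, norm_zero, mul_zero] at h1
    have h2 : ‖projS S (b xs - cs • a xs)‖ ≤ 0 := by
      by_contra h
      push Not at h
      nlinarith [mul_pos hαs0 h]
    exact norm_le_zero_iff.1 h2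

/-! ### From matrices to operators -/

theorem mvec_eq {n : ℕ} (M : Matrix (Fin n) (Fin n) ℝ) (x : EuclideanSpace ℝ (Fin n)) :
    mvec M x = Matrix.toEuclideanCLM (𝕜 := ℝ) M x := rfl

theorem clm_apply {n : ℕ} (M : Matrix (Fin n) (Fin n) ℝ) (x : EuclideanSpace ℝ (Fin n))
    (i : Fin n) : Matrix.toEuclideanCLM (𝕜 := ℝ) M x i = ∑ j, M i j * x j := rfl

theorem qf_eq {n : ℕ} (M : Matrix (Fin n) (Fin n) ℝ) (x : EuclideanSpace ℝ (Fin n)) :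
    qf M x = ⟪x, Matrix.toEuclideanCLM (𝕜 := ℝ) M x⟫ := by
  rw [Matrix.inner_toEuclideanCLM]
  simp only [qf, dotProduct, Matrix.mulVec, Finset.mul_sum, mul_assoc]

theorem clm_symm {n : ℕ} (M : Matrix (Fin n) (Fin n) ℝ) (hM : M.IsHermitian)
    (x y : EuclideanSpace ℝ (Fin n)) :
    ⟪Matrix.toEuclideanCLM (𝕜 := ℝ) M x, y⟫ = ⟪x, Matrix.toEuclideanCLM (𝕜 := ℝ) M y⟫ := by
  have hs : ∀ i j, M i j = M j i := fun i j => by simpa using hM.apply j i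
  rw [real_inner_comm, Matrix.inner_toEuclideanCLM, Matrix.inner_toEuclideanCLM]
  simp only [dotProduct, Matrix.mulVec, Finset.mul_sum]
  rw [Finset.sum_comm]
  refine Finset.sum_congr rfl fun i _ => Finset.sum_congr rfl fun j _ => ?_
  rw [hs i j]
  ring

theorem clm_nonneg {n : ℕ} (M : Matrix (Fin n) (Fin n) ℝ) (hM : M.PosSemidef)
    (x : EuclideanSpace ℝ (Fin n)) : 0 ≤ ⟪x, Matrix.toEuclideanCLM (𝕜 := ℝ) M x⟫ := by
  rw [Matrix.inner_toEuclideanCLM]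
  simpa using hM.dotProduct_mulVec_nonneg (WithLp.ofLp x)

theorem sum_supp {n : ℕ} (x : EuclideanSpace ℝ (Fin n)) (S : Finset (Fin n)) (hS : suppF x ⊆ S)
    (f : Fin n → ℝ) : ∑ j, f j * x j = ∑ j ∈ S, f j * x j := by
  symm
  refine Finset.sum_subset (Finset.subset_univ S) fun j _ hj => ?_
  have : x j = 0 := by
    by_contra h0
    exact hj (hS (by simp [suppF, h0]))
  simp [this]

theorem clm_pos {n r : ℕ} (hrn : r ≤ n) (B : Matrix (Fin n) (Fin n) ℝ)
    (hBr : ∀ Λ : Finset (Fin n), Λ.card = r →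
      (B.submatrix (fun i : Λ => (i : Fin n)) (fun i : Λ => (i : Fin n))).PosDef)
    (x : EuclideanSpace ℝ (Fin n)) (hx : x ∈ sphC n r) :
    0 < ⟪x, Matrix.toEuclideanCLM (𝕜 := ℝ) B x⟫ := by
  obtain ⟨S, hsub, hS⟩ := exists_card_eq hrn (suppF x) hx.1
  have hne : (fun i : S => x i) ≠ 0 := by
    intro h0
    have : x = 0 := by
      rw [← projS_of_supp S x hsub]
      ext i
      rw [projS_apply]
      split_ifs with hi
      · exact congrFun h0 ⟨i, hi⟩
      · rfl
    have h1 := hx.2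
    rw [this, norm_zero] at h1
    exact zero_ne_one h1
  have h2 := (hBr S hS).dotProduct_mulVec_pos hne
  have h3 : ⟪x, Matrix.toEuclideanCLM (𝕜 := ℝ) B x⟫ =
      star (fun i : S => x i) ⬝ᵥ ((B.submatrix (fun i : S => (i : Fin n))
        (fun i : S => (i : Fin n))).mulVec (fun i : S => x i)) := by
    rw [Matrix.inner_toEuclideanCLM]
    simp only [dotProduct, Matrix.mulVec, Matrix.submatrix_apply, Pi.star_apply, star_trivial]
    have h4 : ∀ i, ∑ j, B i j * x j = ∑ j : S, B i j * x j := fun i => by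
      rw [sum_supp x S hsub]
      exact (Finset.sum_coe_sort S (fun j => B i j * x j)).symm
    simp only [h4]
    rw [Finset.sum_congr rfl fun i _ => mul_comm _ _, sum_supp x S hsub]
    rw [← Finset.sum_coe_sort S]
    exact Finset.sum_congr rfl fun i _ => mul_comm _ _
  rw [h3]
  exact h2

/-- Theorems 6.7/6.8: PGSA applied to the sparse generalized eigenvalue problem
converges R-linearly to a critical point of G. -/
theorem pgsa_sgep_Rlinear_convergence_to_critical_point
    {n : ℕ} (r : ℕ) (hr1 : 1 ≤ r) (hrn : r ≤ n)
    (A B : Matrix (Fin n) (Fin n) ℝ)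
    (hA : A.PosSemidef) (hB : B.PosSemidef)
    (hBr : ∀ Λ : Finset (Fin n), Λ.card = r →
      (B.submatrix (fun i : Λ => (i : Fin n)) (fun i : Λ => (i : Fin n))).PosDef)
    (L : ℝ) (hL : L = ‖Matrix.toEuclideanCLM (𝕜 := ℝ) B‖)
    (x : ℕ → EuclideanSpace ℝ (Fin n)) (α : ℕ → ℝ) (αlo αhi : ℝ)
    (hαlo : 0 < αlo) (hαhi : αhi < 1 / L) (hα : ∀ k, αlo ≤ α k ∧ α k ≤ αhi)
    (hx0 : x 0 ∈ sphC n r ∧ qf A (x 0) ≠ 0)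
    (hiter : ∀ k, x (k + 1) ∈ sphC n r ∧ ∀ w ∈ sphC n r,
      ‖x (k + 1) - (x k - α k • mvec B (x k) +
          (α k * (Gfun r A B (x k)).toReal) • mvec A (x k))‖ ≤
        ‖w - (x k - α k • mvec B (x k) +
          (α k * (Gfun r A B (x k)).toReal) • mvec A (x k))‖) :
    ∃ xs : EuclideanSpace ℝ (Fin n), ∃ ρ > (0 : ℝ), ∃ τ ∈ Set.Ioo (0 : ℝ) 1,
      (∀ k, ‖x k - xs‖ ≤ ρ * τ ^ k) ∧
      (xs ∈ sphC n r ∧ qf A xs ≠ 0) ∧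
      (((suppF xs).card < r ∧
          mvec B xs = ((Gfun r A B xs).toReal) • mvec A xs) ∨
        ((suppF xs).card = r ∧ ∀ i ∈ suppF xs,
          (∑ j ∈ suppF xs, B i j * xs j) =
            (Gfun r A B xs).toReal * ∑ j ∈ suppF xs, A i j * xs j)) := by
  have hGr : ∀ z : EuclideanSpace ℝ (Fin n), z ∈ sphC n r → qf A z ≠ 0 →
      (Gfun r A B z).toReal = qf B z / qf A z := by
    intro z h1 h2
    rw [Gfun, if_pos ⟨h1, h2⟩, EReal.toReal_coe]
  set a := Matrix.toEuclideanCLM (𝕜 := ℝ) A with ha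
  set b := Matrix.toEuclideanCLM (𝕜 := ℝ) B with hb
  have hαhi0 : 0 < αhi := hαlo.trans_le ((hα 0).1.trans (hα 0).2)
  have hLhi : ‖b‖ < 1 / αhi := by
    have h1 : 0 < L := one_div_pos.1 (hαhi0.trans hαhi)
    rw [← hL, lt_one_div h1 hαhi0]
    exact hαhi
  have hu : ∀ k, x k - α k • mvec B (x k) + (α k * (Gfun r A B (x k)).toReal) • mvec A (x k) =
      x k - α k • (b (x k) - (Gfun r A B (x k)).toReal • a (x k)) := by
    intro k
    rw [mvec_eq, mvec_eq, smul_sub, smul_smul]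
    abel
  simp only [hu] at hiter
  obtain ⟨xs, ρ, hρ, τ, hτ, hconv, hxs, hAxs, hcrit⟩ := main_abs hrn a b
    (clm_symm A hA.isHermitian) (clm_symm B hB.isHermitian) (clm_nonneg A hA)
    (clm_pos hrn B hBr) x α αlo αhi hαlo hLhi hα (fun k => (Gfun r A B (x k)).toReal)
    ⟨hx0.1, by rw [← qf_eq]; exact hx0.2⟩
    (fun k h1 h2 => by rw [hGr _ h1 (by rw [qf_eq]; exact h2), qf_eq, qf_eq]) hiter
  have hqxs : qf A xs ≠ 0 := by rw [qf_eq]; exact hAxs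
  have hG : ⟪xs, b xs⟫ / ⟪xs, a xs⟫ = (Gfun r A B xs).toReal := by
    rw [hGr xs hxs hqxs, qf_eq, qf_eq]
  rw [hG] at hcrit
  -- the criticality equation, coordinate by coordinate
  have hcoord : ∀ S : Finset (Fin n), S.card = r → suppF xs ⊆ S → ∀ i ∈ S,
      b xs i = (Gfun r A B xs).toReal * a xs i := by
    intro S hS hsub i hi
    have h1 := congrArg (fun v : EuclideanSpace ℝ (Fin n) => v i) (hcrit S hS hsub)
    simp only [projS_apply, if_pos hi] at h1
    simpa [sub_eq_zero] using h1
  refine ⟨xs, ρ, hρ, τ, hτ, hconv, ⟨hxs, hqxs⟩, ?_⟩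
  rcases lt_or_eq_of_le hxs.1 with hlt | heq
  · left
    refine ⟨hlt, ?_⟩
    ext i
    obtain ⟨S, hsub, hS⟩ := exists_card_eq hrn (insert i (suppF xs))
      ((Finset.card_insert_le _ _).trans hlt)
    have := hcoord S hS ((Finset.subset_insert _ _).trans hsub) i
      (hsub (Finset.mem_insert_self _ _))
    rw [mvec_eq, mvec_eq]
    exact this
  · right
    refine ⟨heq, fun i hi => ?_⟩
    have := hcoord _ heq subset_rfl i hi
    rw [ha, hb, clm_apply, clm_apply, sum_supp xs _ subset_rfl, sum_supp xs _ subset_rfl] at this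
    exact this
end
end
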